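/- arXiv:1801.06110 — 3 statements merged into one kernel-verified Lean document; each statement's English description precedes it below -/
import Mathlib

section
/- For every ε > 0 and δ > 0 there exist a real y = y(ε,δ) > 0, a constant C > 0 and x₀ such that for all x ≥ x₀: the number of primes p ≤ x that are y-rough and satisfy g(p) ≤ C·p^(1/(4√e)+ε) is at least (1−δ) times the number of y-rough primes p ≤ x. -/
/-!
Almost all primes, rough or not, have a very small least primitive root, so `y = 1` (for which
every prime is `y`-rough) and `C = 1` work. The only property of the exponent needed is
`1 / (4√e) ≥ 3 / 20`; no character sum estimate for individual moduli enters.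

Put `z = ⌊x ^ (1 / 8)⌋` and call a prime `z < p ≤ x` exceptional if `[1, z]` contains no primitive
root modulo `p`. Expanding the indicator of the primitive roots in characters shows that some
nonprincipal `χ_p` has `|∑_{m ≤ z} χ_p(m)| ≥ z / τ(p - 1) ^ 2` (`exists_large_char_sum`). The 24th
power of this sum is a sum of `χ_p` over products of 24 integers, so `χ_p` correlates, up to factors
`x ^ o(1)` coming from the divisor bound, with a fixed sequence supported on `[1, z ^ 24]`, where
`z ^ 24` is about `x ^ 3`. Characters to distinct prime moduli `p, q ≤ x` are orthogonal up to an
error `p q ≤ x ^ 2` on that interval (`norm_sum_mul_conj_le`), so by Cauchy–Schwarz and the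
resulting large sieve inequality (`large_sieve`, `card_exceptional_sq_le`) only `O(z)` primes are
exceptional (`card_exceptionalPrimes_le`).

A nonexceptional prime `p > x ^ (5 / 6)` has `g(p) ≤ x ^ (1 / 8) ≤ p ^ (3 / 20)`. Hence all but
`O(x ^ (5 / 6))` primes up to `x` satisfy the bound, and this is at most `δ π(x)` for large `x` by
Chebyshev's lower bound.
-/

/-- The least primitive root modulo `p`: the least positive integer whose
residue class mod `p` has multiplicative order `p - 1`. -/
noncomputable def leastPrimRoot (p : ℕ) : ℕ :=
  sInf {n : ℕ | 0 < n ∧ orderOf ((n : ZMod p)) = p - 1}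

/-- A prime `p` is `y`-rough if every prime factor of `p - 1` other than `2`
is at least `y`. -/
def IsRough (y : ℝ) (p : ℕ) : Prop :=
  ∀ q : ℕ, q.Prime → q ∣ p - 1 → q ≠ 2 → y ≤ (q : ℝ)

/-! ### Divisor, totient and Möbius sums -/

lemma exists_succ_pow_le (k : ℕ) : ∃ L : ℕ, 1 ≤ L ∧ ∀ a : ℕ, (a + 1) ^ k ≤ L * 2 ^ a := by
  have h := (tendsto_pow_const_div_const_pow_of_one_lt k (one_lt_two : (1:ℝ) < 2)).bddAbove_range
  obtain ⟨B, hB⟩ := h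
  refine ⟨2 * ⌈B⌉₊ + 1, by omega, fun a => ?_⟩
  have h1 : ((a + 1 : ℕ) : ℝ) ^ k / 2 ^ (a + 1) ≤ B := hB ⟨a + 1, rfl⟩
  rw [div_le_iff₀ (by positivity)] at h1
  have h2 : B ≤ (⌈B⌉₊ : ℝ) := Nat.le_ceil B
  have : ((a + 1 : ℕ) : ℝ) ^ k ≤ ((2 * ⌈B⌉₊ + 1 : ℕ) : ℝ) * 2 ^ a := by
    push_cast at *
    have h3 : (0:ℝ) < 2 ^ a := by positivity
    calc _ ≤ _ := h1
      _ = 2 * B * 2 ^ a := by ring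
      _ ≤ _ := by gcongr; linarith
  exact_mod_cast this

/-- The divisor bound `τ(n) ≪ n ^ (1 / k)`. In the Euler product of `τ(n) ^ k / n`, primes
`p ≥ 2 ^ k` contribute factors at most `1`, and the finitely many others are bounded. -/
lemma exists_card_divisors_pow_le (k : ℕ) :
    ∃ K : ℕ, 1 ≤ K ∧ ∀ n : ℕ, n ≠ 0 → n.divisors.card ^ k ≤ K * n := by
  obtain ⟨L, hL, h⟩ := exists_succ_pow_le k
  refine ⟨L ^ (2 ^ k), Nat.one_le_pow _ _ hL, fun n hn => ?_⟩
  rw [Nat.card_divisors hn, ← Finset.prod_pow]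
  have hp : ∀ p ∈ n.primeFactors, (n.factorization p + 1) ^ k ≤
      (if p < 2 ^ k then L else 1) * p ^ n.factorization p := by
    intro p hp
    have hp2 := (Nat.prime_of_mem_primeFactors hp).two_le
    split_ifs with hlt
    · exact (h _).trans (by gcongr)
    · push Not at hlt
      calc (n.factorization p + 1) ^ k ≤ (2 ^ n.factorization p) ^ k := by
            gcongr; exact Nat.lt_two_pow_self
        _ = (2 ^ k) ^ n.factorization p := by rw [← pow_mul, ← pow_mul, mul_comm]
        _ ≤ _ := by rw [one_mul]; gcongr
  refine (Finset.prod_le_prod' hp).trans ?_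
  rw [Finset.prod_mul_distrib]
  have e : ∏ p ∈ n.primeFactors, p ^ n.factorization p = n :=
    Nat.prod_factorization_pow_eq_self hn
  rw [e]
  gcongr
  rw [Finset.prod_ite, Finset.prod_const, Finset.prod_const_one, mul_one]
  apply Nat.pow_le_pow_right hL
  calc _ ≤ (Finset.range (2 ^ k)).card := Finset.card_le_card (by
        intro p hp; simp at hp ⊢; exact hp.2)
    _ = _ := by simp

/-- `n / φ(n) ≤ 2 ^ ω(n) ≤ τ(n)`, since `p ≤ 2 (p - 1)` for each prime `p`. -/
lemma le_totient_mul_card_divisors (n : ℕ) (hn : n ≠ 0) :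
    n ≤ n.totient * n.divisors.card := by
  have h1 := Nat.totient_mul_prod_primeFactors n
  have h2 : ∏ p ∈ n.primeFactors, p ≤
      n.divisors.card * ∏ p ∈ n.primeFactors, (p - 1) := by
    rw [Nat.card_divisors hn, ← Finset.prod_mul_distrib]
    refine Finset.prod_le_prod' fun p hp => ?_
    have hpp := Nat.prime_of_mem_primeFactors hp
    have h3 := hpp.two_le
    have h4 : 1 ≤ n.factorization p :=
      hpp.factorization_pos_of_dvd hn (Nat.dvd_of_mem_primeFactors hp)
    calc p ≤ 2 * (p - 1) := by omega
      _ ≤ _ := by gcongr; omega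
  have h5 : 0 < ∏ p ∈ n.primeFactors, (p - 1) := Finset.prod_pos fun p hp => by
    have := (Nat.prime_of_mem_primeFactors hp).two_le; omega
  refine Nat.le_of_mul_le_mul_right ?_ h5
  rw [← h1, mul_assoc]
  gcongr

lemma sum_moebius_dvd (n k : ℕ) (hn : n ≠ 0) :
    ∑ d ∈ n.divisors, (if d ∣ k then ArithmeticFunction.moebius d else 0) =
      if n.gcd k = 1 then 1 else 0 := by
  rw [← Finset.sum_filter]
  have : n.divisors.filter (· ∣ k) = (n.gcd k).divisors := by
    ext d
    simp [Nat.dvd_gcd_iff, hn]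
  rw [this, ← ArithmeticFunction.coe_mul_zeta_apply, ArithmeticFunction.moebius_mul_coe_zeta,
    ArithmeticFunction.one_apply]

/-- `∑_{d ∣ n} μ(d) / d = φ(n) / n`, by counting the `k < n` coprime to `n` with Möbius inversion. -/
lemma sum_moebius_div (n : ℕ) (hn : n ≠ 0) :
    ∑ d ∈ n.divisors, (ArithmeticFunction.moebius d : ℂ) / d = n.totient / n := by
  have h : ∑ k ∈ Finset.range n, ∑ d ∈ n.divisors,
      (if d ∣ k then (ArithmeticFunction.moebius d : ℂ) else 0) = n.totient := by
    have : ∀ k, ∑ d ∈ n.divisors, (if d ∣ k then (ArithmeticFunction.moebius d : ℂ) else 0)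
        = if n.gcd k = 1 then 1 else 0 := fun k => by
      have := congrArg (Int.cast : ℤ → ℂ) (sum_moebius_dvd n k hn)
      push_cast at this
      exact this
    simp_rw [this]
    rw [Finset.sum_boole, Nat.totient]
  rw [Finset.sum_comm] at h
  rw [← h, Finset.sum_div]
  refine Finset.sum_congr rfl fun d hd => ?_
  obtain ⟨hdn, -⟩ := Nat.mem_divisors.1 hd
  have hd0 : d ≠ 0 := fun h => hn (by simpa [h] using hdn)
  have hc : ((Finset.range n).filter (d ∣ ·)).card = n / d := by
    obtain ⟨e, rfl⟩ := hdn
    rw [Nat.mul_div_cancel_left _ (Nat.pos_of_ne_zero hd0)]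
    have : (Finset.range (d * e)).filter (d ∣ ·) = (Finset.range e).image (d * ·) := by
      ext k
      simp only [Finset.mem_filter, Finset.mem_range, Finset.mem_image]
      constructor
      · rintro ⟨hk, c, rfl⟩
        exact ⟨c, lt_of_mul_lt_mul_left hk (Nat.zero_le d), rfl⟩
      · rintro ⟨c, hc, rfl⟩
        exact ⟨Nat.mul_lt_mul_of_pos_left hc (Nat.pos_of_ne_zero hd0), c, rfl⟩
    rw [this, Finset.card_image_of_injective _ fun x y h => Nat.eq_of_mul_eq_mul_left
      (Nat.pos_of_ne_zero hd0) h, Finset.card_range]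
  rw [← Finset.sum_filter, Finset.sum_const, hc, nsmul_eq_mul, Nat.cast_div hdn (by exact_mod_cast hd0)]
  have : (n:ℂ) ≠ 0 := by exact_mod_cast hn
  have : (d:ℂ) ≠ 0 := by exact_mod_cast hd0
  field_simp

/-! ### Large character sums for primes without small primitive roots -/

/-- Detection of `d ∣ k` by the `d`-th roots of unity. -/
lemma geom_sum_root_of_unity {n d : ℕ} (hn : n ≠ 0) (hd : d ∣ n) {ζ : ℂ}
    (hζ : IsPrimitiveRoot ζ n) (k : ℕ) :
    ∑ i ∈ Finset.range d, ζ ^ (k * (n / d * i)) = if d ∣ k then (d : ℂ) else 0 := by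
  have hw : IsPrimitiveRoot (ζ ^ (n / d)) d :=
    hζ.pow (Nat.pos_of_ne_zero hn) (Nat.div_mul_cancel hd).symm
  have e : ∀ i, ζ ^ (k * (n / d * i)) = ((ζ ^ (n / d)) ^ k) ^ i := fun i => by
    rw [← pow_mul, ← pow_mul]; congr 1; ring
  simp_rw [e]
  split_ifs with h
  · rw [(hw.pow_eq_one_iff_dvd k).2 h]; simp
  · have h1 : (ζ ^ (n / d)) ^ k ≠ 1 := fun h' => h ((hw.pow_eq_one_iff_dvd k).1 h')
    rw [geom_sum_eq h1, ← pow_mul, mul_comm k d, pow_mul, hw.pow_eq_one, one_pow, sub_self,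
      zero_div]

/-- If `[1, z]` contains no primitive root modulo `p`, some nonprincipal character modulo `p` has
a sum over `[1, z]` of size at least `z / τ(p - 1) ^ 2`. The indicator of the primitive roots is
`∑_{d ∣ p - 1} (μ(d) / d) ∑_{χ ^ d = 1} χ`, whose principal part is `φ(p - 1) / (p - 1)`, and
for each `d` the nonprincipal part contributes less than one maximal character sum. -/
lemma exists_large_char_sum {p : ℕ} (hp : p.Prime) {z : ℕ} (hz : 1 ≤ z) (hzp : z < p)
    (h : ∀ m ∈ Finset.Icc 1 z, orderOf (m : ZMod p) ≠ p - 1) :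
    ∃ χ : MulChar (ZMod p) ℂ, χ ≠ 1 ∧
      (z : ℝ) ≤ ‖∑ m ∈ Finset.Icc 1 z, χ (m : ZMod p)‖ * ((p - 1).divisors.card : ℝ) ^ 2 := by
  have : Fact p.Prime := ⟨hp⟩
  set n := p - 1 with hn
  have hn0 : n ≠ 0 := by have := hp.two_le; omega
  have hnC : (n : ℂ) ≠ 0 := by exact_mod_cast hn0
  have hcard : Fintype.card (ZMod p)ˣ = n := ZMod.card_units p
  obtain ⟨ζ, hζ⟩ : ∃ ζ : ℂ, IsPrimitiveRoot ζ n := ⟨_, Complex.isPrimitiveRoot_exp n hn0⟩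
  obtain ⟨g, hg⟩ := IsCyclic.exists_generator (α := (ZMod p)ˣ)
  have hgo : orderOf g = n := by rw [orderOf_eq_card_of_forall_mem_zpowers hg, Nat.card_eq_fintype_card, hcard]
  have hζu : (hζ.isUnit hn0).unit ∈ rootsOfUnity (Fintype.card (ZMod p)ˣ) ℂ := by
    rw [mem_rootsOfUnity, hcard]
    ext
    simp [hζ.pow_eq_one]
  let χ : MulChar (ZMod p) ℂ := MulChar.ofRootOfUnity hζu hg
  have hχg : χ g = ζ := by
    simp only [χ]
    rw [MulChar.ofRootOfUnity_spec hζu hg]; simp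
  -- discrete logarithms to base `g`
  have hk : ∀ m ∈ Finset.Icc 1 z, ∃ k : ℕ, (m : ZMod p) = ((g ^ k : (ZMod p)ˣ) : ZMod p) := by
    intro m hm
    rw [Finset.mem_Icc] at hm
    have hm0 : (m : ZMod p) ≠ 0 := by
      rw [Ne, ZMod.natCast_eq_zero_iff]
      exact Nat.not_dvd_of_pos_of_lt hm.1 (by omega)
    obtain ⟨k, hk⟩ := (mem_powers_iff_mem_zpowers (x := g)).2 (hg (Units.mk0 _ hm0))
    exact ⟨k, by simp only at hk; rw [hk]; simp⟩
  choose! k hk using hk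
  have hχm : ∀ m ∈ Finset.Icc 1 z, ∀ j, (χ ^ j) (m : ZMod p) = ζ ^ (k m * j) := by
    intro m hm j
    rw [hk m hm, MulChar.pow_apply_coe, Units.val_pow_eq_pow_val, map_pow, hχg, ← pow_mul]
  have hcop : ∀ m ∈ Finset.Icc 1 z, n.gcd (k m) ≠ 1 := by
    intro m hm hc
    apply h m hm
    rw [hk m hm, orderOf_units, orderOf_pow, hgo, hc, Nat.div_one]
  by_contra! hcon
  have hT : (0 : ℝ) < n.divisors.card := by
    exact_mod_cast Finset.card_pos.2 ⟨1, by simp [hn0]⟩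
  have hzR : (0 : ℝ) < z := by exact_mod_cast hz
  -- the number of primitive roots in `[1, z]`, expanded in the characters `χ ^ j`, is zero
  have hid : ∑ d ∈ n.divisors, (ArithmeticFunction.moebius d : ℂ) / d *
      ∑ i ∈ Finset.range d, ∑ m ∈ Finset.Icc 1 z, (χ ^ (n / d * i)) (m : ZMod p) = 0 := by
    have : ∀ d ∈ n.divisors, (ArithmeticFunction.moebius d : ℂ) / d *
      ∑ i ∈ Finset.range d, ∑ m ∈ Finset.Icc 1 z, (χ ^ (n / d * i)) (m : ZMod p) =
        ∑ m ∈ Finset.Icc 1 z, if d ∣ k m then (ArithmeticFunction.moebius d : ℂ) else 0 := by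
      intro d hd
      obtain ⟨hdn, -⟩ := Nat.mem_divisors.1 hd
      have hd0 : (d : ℂ) ≠ 0 := by
        have : d ≠ 0 := fun h => hn0 (by simpa [h] using hdn)
        exact_mod_cast this
      rw [Finset.sum_comm, Finset.mul_sum]
      refine Finset.sum_congr rfl fun m hm => ?_
      rw [Finset.sum_congr rfl fun i _ => hχm m hm _, geom_sum_root_of_unity hn0 hdn hζ]
      split_ifs
      · field_simp
      · simp
    rw [Finset.sum_congr rfl this, Finset.sum_comm]
    refine Finset.sum_eq_zero fun m hm => ?_
    have := congrArg (Int.cast : ℤ → ℂ) (sum_moebius_dvd n (k m) hn0)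
    push_cast at this
    rw [this, if_neg (hcop m hm)]
  -- the terms `i = 0` are principal and are moved to the other side
  have hid2 : (z : ℂ) * (n.totient / n) = - ∑ d ∈ n.divisors, (ArithmeticFunction.moebius d : ℂ) / d *
      ∑ i ∈ Finset.Ico 1 d, ∑ m ∈ Finset.Icc 1 z, (χ ^ (n / d * i)) (m : ZMod p) := by
    rw [eq_neg_iff_add_eq_zero, ← hid, ← sum_moebius_div n hn0, Finset.mul_sum,
      ← Finset.sum_add_distrib]
    refine Finset.sum_congr rfl fun d hd => ?_
    have hd0 : 0 < d := Nat.pos_of_mem_divisors hd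
    rw [Finset.range_eq_Ico, Finset.sum_eq_sum_Ico_succ_bot hd0, mul_add, mul_comm]
    congr 2
    rw [Finset.sum_congr rfl fun m hm => hχm m hm _]
    simp
  set B : ℝ := z / (n.divisors.card : ℝ) ^ 2 with hB
  have hB0 : 0 < B := by positivity
  have hne : ∀ d ∈ n.divisors, ∀ i ∈ Finset.Ico 1 d, χ ^ (n / d * i) ≠ 1 := by
    intro d hd i hi h1
    rw [Finset.mem_Ico] at hi
    obtain ⟨hdn, -⟩ := Nat.mem_divisors.1 hd
    have h2 : (χ ^ (n / d * i)) g = 1 := by rw [h1, MulChar.one_apply_coe]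
    rw [MulChar.pow_apply_coe, hχg, hζ.pow_eq_one_iff_dvd] at h2
    have h3 : 0 < n / d := Nat.div_pos (Nat.le_of_dvd (Nat.pos_of_ne_zero hn0) hdn) (by omega)
    have h4 := Nat.le_of_dvd (by have := hi.1; positivity) h2
    have h5 : n / d * i < n / d * d := Nat.mul_lt_mul_of_pos_left hi.2 h3
    rw [Nat.div_mul_cancel hdn] at h5
    omega
  -- there are `d - 1` characters against a weight `1 / d`, so the bound `B` is strict
  have hlt : ∀ d ∈ n.divisors, ‖(ArithmeticFunction.moebius d : ℂ) / d *
      ∑ i ∈ Finset.Ico 1 d, ∑ m ∈ Finset.Icc 1 z, (χ ^ (n / d * i)) (m : ZMod p)‖ < B := by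
    intro d hd
    have hd0 : 0 < d := Nat.pos_of_mem_divisors hd
    have hdR : (0 : ℝ) < d := by exact_mod_cast hd0
    have h1 : ‖∑ i ∈ Finset.Ico 1 d, ∑ m ∈ Finset.Icc 1 z, (χ ^ (n / d * i)) (m : ZMod p)‖
        ≤ (d - 1) * B := by
      refine (norm_sum_le_of_le _ fun i hi =>
        ((lt_div_iff₀ (by positivity)).2 (hcon _ (hne d hd i hi))).le).trans ?_
      rw [Finset.sum_const, Nat.card_Ico, nsmul_eq_mul, Nat.cast_sub hd0, Nat.cast_one]
    have h2 : ‖(ArithmeticFunction.moebius d : ℂ)‖ ≤ 1 := by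
      rw [Complex.norm_intCast]
      exact_mod_cast ArithmeticFunction.abs_moebius_le_one
    rw [norm_mul, norm_div, Complex.norm_natCast]
    calc _ ≤ 1 / (d : ℝ) * ((d - 1) * B) := by gcongr
      _ = B - B / d := by field_simp
      _ < B := by linarith [div_pos hB0 hdR]
  have h6 : ‖(z : ℂ) * (n.totient / n)‖ < n.divisors.card * B := by
    rw [hid2, norm_neg]
    refine (norm_sum_le _ _).trans_lt ?_
    calc _ < ∑ d ∈ n.divisors, B := Finset.sum_lt_sum_of_nonempty ⟨1, by simp [hn0]⟩ hlt
      _ = _ := by simp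
  have h7 : ‖(z : ℂ) * (n.totient / n)‖ = z * (n.totient / n) := by
    simp
  rw [h7, hB] at h6
  have h8 : (n : ℝ) ≤ n.totient * n.divisors.card := by
    exact_mod_cast le_totient_mul_card_divisors n hn0
  have hnR : (0 : ℝ) < n := by exact_mod_cast Nat.pos_of_ne_zero hn0
  have h9 : (n.divisors.card : ℝ) * (z / n.divisors.card ^ 2) = z / n.divisors.card := by
    field_simp
  rw [h9, ← mul_div_assoc, div_lt_div_iff₀ hnR hT] at h6
  nlinarith

/-! ### Large sieve for characters to prime moduli -/

lemma norm_sum_range_le_of_periodic {k : ℕ} (hk : 0 < k) (F : ℕ → ℂ) (hF : ∀ n, F (n + k) = F n)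
    (h0 : ∑ n ∈ Finset.range k, F n = 0) (h1 : ∀ n, ‖F n‖ ≤ 1) (M : ℕ) :
    ‖∑ n ∈ Finset.range M, F n‖ ≤ k := by
  induction M using Nat.strong_induction_on with
  | _ M ih =>
    rcases lt_or_ge M k with h | h
    · calc _ ≤ ∑ n ∈ Finset.range M, (1 : ℝ) := norm_sum_le_of_le _ fun n _ => h1 n
        _ = M := by simp
        _ ≤ k := by exact_mod_cast h.le
    · obtain ⟨m, rfl⟩ := Nat.exists_eq_add_of_le h
      rw [Finset.sum_range_add, h0, zero_add]
      simp_rw [add_comm k, hF]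
      exact ih m (by omega)

lemma norm_mulChar_le_one {p : ℕ} [NeZero p] (χ : MulChar (ZMod p) ℂ) (a : ZMod p) : ‖χ a‖ ≤ 1 :=
  DirichletCharacter.norm_le_one χ a

lemma sum_range_eq_sum_zmod (k : ℕ) [NeZero k] (F : ZMod k → ℂ) :
    ∑ n ∈ Finset.range k, F (n : ZMod k) = ∑ a, F a := by
  refine Finset.sum_bij' (fun n _ => (n : ZMod k)) (fun a _ => a.val) ?_ ?_ ?_ ?_ ?_
  · simp
  · intro a _; simpa using ZMod.val_lt a
  · intro n hn; exact ZMod.val_cast_of_lt (by simpa using hn)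
  · intro a _; simp
  · simp

/-- Characters to distinct prime moduli `p` and `q` are nearly orthogonal on any initial interval:
by the Chinese remainder theorem the product sums to zero over a full period `p * q`. -/
lemma norm_sum_mul_conj_le {p q : ℕ} (hp : p.Prime) (hq : q.Prime) (hpq : p ≠ q)
    {χ : MulChar (ZMod p) ℂ} (hχ : χ ≠ 1) (ψ : MulChar (ZMod q) ℂ) (M : ℕ) :
    ‖∑ n ∈ Finset.range M, χ (n : ZMod p) * (starRingEnd ℂ) (ψ (n : ZMod q))‖ ≤ (p * q : ℕ) := by
  have : NeZero p := ⟨hp.ne_zero⟩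
  have : NeZero q := ⟨hq.ne_zero⟩
  refine norm_sum_range_le_of_periodic (Nat.mul_pos hp.pos hq.pos) _ (fun n => ?_) ?_ (fun n => ?_) M
  · simp
  · have hc : p.Coprime q := (Nat.coprime_primes hp hq).2 hpq
    have h := sum_range_eq_sum_zmod (p * q) (fun a => χ ((ZMod.chineseRemainder hc a).1) *
      (starRingEnd ℂ) (ψ ((ZMod.chineseRemainder hc a).2)))
    simp only [map_natCast, Prod.fst_natCast, Prod.snd_natCast] at h
    refine h.trans (((ZMod.chineseRemainder hc).toEquiv.sum_comp
      (fun a : ZMod p × ZMod q => χ a.1 * (starRingEnd ℂ) (ψ a.2))).trans ?_)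
    rw [Fintype.sum_prod_type]
    have : Fact p.Prime := ⟨hp⟩
    simp_rw [← Finset.mul_sum]
    rw [← Finset.sum_mul, MulChar.sum_eq_zero_of_ne_one hχ, zero_mul]
  · rw [norm_mul, RCLike.norm_conj]
    exact mul_le_one₀ (norm_mulChar_le_one _ _) (norm_nonneg _) (norm_mulChar_le_one _ _)

/-- A crude large sieve inequality with one nonprincipal character for each prime in `E`, in its
dual form. Expanding the square, the diagonal contributes at most `E.card * M` and each
off-diagonal pair at most `x ^ 2`. -/
lemma large_sieve {E : Finset ℕ} {x : ℕ} (hE : ∀ p ∈ E, p.Prime ∧ p ≤ x)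
    (χ : ∀ p : ℕ, MulChar (ZMod p) ℂ) (hχ : ∀ p ∈ E, χ p ≠ 1) (c : ℕ → ℂ)
    (hc : ∀ p ∈ E, ‖c p‖ ≤ 1) (M : ℕ) :
    ∑ n ∈ Finset.range M, ‖∑ p ∈ E, c p * χ p (n : ZMod p)‖ ^ 2 ≤
      (E.card : ℝ) * M + (E.card : ℝ) ^ 2 * (x : ℝ) ^ 2 := by
  have key : ((∑ n ∈ Finset.range M, ‖∑ p ∈ E, c p * χ p (n : ZMod p)‖ ^ 2 : ℝ) : ℂ) =
      ∑ p ∈ E, ∑ q ∈ E, c p * (starRingEnd ℂ) (c q) *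
        ∑ n ∈ Finset.range M, χ p (n : ZMod p) * (starRingEnd ℂ) (χ q (n : ZMod q)) := by
    push_cast
    simp_rw [← Complex.mul_conj', map_sum, Finset.sum_mul_sum, Finset.mul_sum]
    rw [Finset.sum_comm]
    refine Finset.sum_congr rfl fun p _ => ?_
    rw [Finset.sum_comm]
    refine Finset.sum_congr rfl fun q _ => Finset.sum_congr rfl fun n _ => ?_
    rw [map_mul]; ring
  have hb : ∀ p ∈ E, ∀ q ∈ E, ‖c p * (starRingEnd ℂ) (c q) *
        ∑ n ∈ Finset.range M, χ p (n : ZMod p) * (starRingEnd ℂ) (χ q (n : ZMod q))‖ ≤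
      (if p = q then (M : ℝ) else 0) + (x : ℝ) ^ 2 := by
    intro p hp q hq
    have hcc : ‖c p * (starRingEnd ℂ) (c q)‖ ≤ 1 := by
      rw [norm_mul, RCLike.norm_conj]
      exact mul_le_one₀ (hc p hp) (norm_nonneg _) (hc q hq)
    rw [norm_mul]
    refine (mul_le_of_le_one_left (norm_nonneg _) hcc).trans ?_
    split_ifs with hpq
    · subst hpq
      have : NeZero p := ⟨(hE p hp).1.ne_zero⟩
      have : ‖∑ n ∈ Finset.range M, χ p (n : ZMod p) * (starRingEnd ℂ) (χ p (n : ZMod p))‖ ≤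
          ∑ n ∈ Finset.range M, (1 : ℝ) := norm_sum_le_of_le _ fun n _ => by
        rw [norm_mul, RCLike.norm_conj]
        exact mul_le_one₀ (norm_mulChar_le_one _ _) (norm_nonneg _) (norm_mulChar_le_one _ _)
      simp only [Finset.sum_const, Finset.card_range, nsmul_eq_mul, mul_one] at this
      nlinarith [sq_nonneg (x : ℝ)]
    · refine (norm_sum_mul_conj_le (hE p hp).1 (hE q hq).1 hpq (hχ p hp) (χ q) M).trans ?_
      have h1 : p * q ≤ x ^ 2 := by
        rw [sq]; exact Nat.mul_le_mul (hE p hp).2 (hE q hq).2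
      rw [zero_add]
      exact_mod_cast h1
  have h2 : ∑ n ∈ Finset.range M, ‖∑ p ∈ E, c p * χ p (n : ZMod p)‖ ^ 2 =
      ‖((∑ n ∈ Finset.range M, ‖∑ p ∈ E, c p * χ p (n : ZMod p)‖ ^ 2 : ℝ) : ℂ)‖ := by
    rw [Complex.norm_real, Real.norm_of_nonneg (Finset.sum_nonneg fun _ _ => by positivity)]
  rw [h2, key]
  refine (norm_sum_le_of_le _ fun p hp => norm_sum_le_of_le _ fun q hq => hb p hp q hq).trans ?_
  simp only [Finset.sum_add_distrib, Finset.sum_ite_eq, Finset.sum_const, nsmul_eq_mul]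
  rw [Finset.sum_ite_mem, Finset.inter_self, Finset.sum_const, nsmul_eq_mul]
  apply le_of_eq; ring

/-- A bound for the number of primes `p ∈ E` whose character `χ p` has a large sum over `[1, z]`.
The `r`-th power of that sum is a sum of `χ p` over products of `r` integers from `[1, z]`.
Such products reach up to `z ^ r`, long enough for the large sieve to be effective, and each
integer `n` is hit at most `τ(n) ^ r` times. -/
lemma card_exceptional_sq_le {E : Finset ℕ} {x z r D : ℕ} {η : ℝ} (hη : 0 ≤ η)
    (hE : ∀ p ∈ E, p.Prime ∧ p ≤ x)
    (χ : ∀ p : ℕ, MulChar (ZMod p) ℂ) (hχ : ∀ p ∈ E, χ p ≠ 1)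
    (hS : ∀ p ∈ E, η ≤ ‖∑ m ∈ Finset.Icc 1 z, χ p (m : ZMod p)‖ ^ r)
    (hD : ∀ n : ℕ, n ≠ 0 → n ≤ z ^ r → n.divisors.card ≤ D) :
    ((E.card : ℝ) * η) ^ 2 ≤ (z : ℝ) ^ r * ((D : ℝ) ^ r *
      ((E.card : ℝ) * (z ^ r + 1 : ℕ) + (E.card : ℝ) ^ 2 * (x : ℝ) ^ 2)) := by
  set S : ℕ → ℂ := fun p => (∑ m ∈ Finset.Icc 1 z, χ p (m : ZMod p)) ^ r with hSdef
  -- phases that make every `c p * S p` equal to `‖S p‖`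
  set c : ℕ → ℂ := fun p => (starRingEnd ℂ) (S p) / ‖S p‖ with hcdef
  have hc : ∀ p, ‖c p‖ ≤ 1 := fun p => by
    simp only [hcdef, norm_div, RCLike.norm_conj, Complex.norm_real, norm_norm]
    exact div_self_le_one _
  have hcS : ∀ p, c p * S p = (‖S p‖ : ℂ) := fun p => by
    simp only [hcdef]
    rw [div_mul_eq_mul_div, mul_comm, Complex.mul_conj', sq, mul_self_div_self]
  set V := Fintype.piFinset fun _ : Fin r => Finset.Icc 1 z with hV
  set h : ℕ → ℂ := fun n => ∑ p ∈ E, c p * χ p (n : ZMod p) with hh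
  have h1 : (E.card : ℝ) * η ≤ ∑ v ∈ V, ‖h (∏ i, v i)‖ := by
    have e1 : ∑ v ∈ V, h (∏ i, v i) = ((∑ p ∈ E, ‖S p‖ : ℝ) : ℂ) := by
      push_cast
      simp_rw [← hcS, hh]
      rw [Finset.sum_comm]
      refine Finset.sum_congr rfl fun p _ => ?_
      rw [hSdef]
      simp only
      rw [Finset.sum_pow', Finset.mul_sum]
      refine Finset.sum_congr rfl fun v _ => ?_
      rw [Nat.cast_prod, map_prod]
    calc (E.card : ℝ) * η = ∑ p ∈ E, η := by simp
      _ ≤ ∑ p ∈ E, ‖S p‖ := Finset.sum_le_sum fun p hp => by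
          simp only [hSdef, norm_pow]; exact hS p hp
      _ = ‖((∑ p ∈ E, ‖S p‖ : ℝ) : ℂ)‖ := by
          rw [Complex.norm_real, Real.norm_of_nonneg (Finset.sum_nonneg fun _ _ => norm_nonneg _)]
      _ ≤ _ := by rw [← e1]; exact norm_sum_le _ _
  have hVc : (V.card : ℝ) = (z : ℝ) ^ r := by
    simp [hV]
  have hmem : ∀ v ∈ V, (∏ i, v i) ≠ 0 ∧ (∏ i, v i) ≤ z ^ r := by
    intro v hv
    rw [hV, Fintype.mem_piFinset] at hv
    constructor
    · exact Finset.prod_ne_zero_iff.2 fun i _ => by have := Finset.mem_Icc.1 (hv i); omega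
    · calc _ ≤ ∏ _i : Fin r, z := Finset.prod_le_prod' fun i _ => (Finset.mem_Icc.1 (hv i)).2
        _ = _ := by simp
  have h2 : ∑ v ∈ V, ‖h (∏ i, v i)‖ ^ 2 ≤
      (D : ℝ) ^ r * ∑ n ∈ Finset.range (z ^ r + 1), ‖h n‖ ^ 2 := by
    rw [← Finset.sum_fiberwise_of_maps_to (s := V) (t := Finset.range (z ^ r + 1))
      (g := fun v => ∏ i, v i)
      (fun v hv => Finset.mem_range.2 (Nat.lt_succ_of_le (hmem v hv).2)), Finset.mul_sum]
    refine Finset.sum_le_sum fun n hn => ?_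
    rw [Finset.sum_congr rfl (g := fun _ => ‖h n‖ ^ 2)
      (fun v hv => by rw [(Finset.mem_filter.1 hv).2]), Finset.sum_const, nsmul_eq_mul]
    gcongr
    rcases Finset.eq_empty_or_nonempty (V.filter fun v => ∏ i, v i = n) with he | ⟨v, hv⟩
    · rw [he]; simp
    · obtain ⟨hvV, rfl⟩ := Finset.mem_filter.1 hv
      obtain ⟨hn0, hnz⟩ := hmem v hvV
      have : (V.filter fun w => ∏ i, w i = ∏ i, v i) ⊆
          Fintype.piFinset fun _ : Fin r => (∏ i, v i).divisors := by
        intro w hw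
        obtain ⟨hwV, hwe⟩ := Finset.mem_filter.1 hw
        rw [Fintype.mem_piFinset]
        intro i
        rw [Nat.mem_divisors]
        exact ⟨hwe ▸ Finset.dvd_prod_of_mem w (Finset.mem_univ i), hn0⟩
      have h3 := Finset.card_le_card this
      rw [Fintype.card_piFinset_const] at h3
      have h4 := h3.trans (Nat.pow_le_pow_left (hD _ hn0 hnz) r)
      exact_mod_cast h4
  calc ((E.card : ℝ) * η) ^ 2 ≤ (∑ v ∈ V, ‖h (∏ i, v i)‖) ^ 2 := by gcongr
    _ ≤ V.card * ∑ v ∈ V, ‖h (∏ i, v i)‖ ^ 2 := sq_sum_le_card_mul_sum_sq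
    _ ≤ _ := by
      rw [hVc]
      gcongr
      refine h2.trans ?_
      gcongr
      exact large_sieve hE χ hχ c (fun p _ => hc p) _

/-! ### Counting exceptional primes -/

open scoped Classical in
/-- The primes `p ≤ x` exceeding `z` that have no primitive root in `[1, z]`. -/
noncomputable def exceptionalPrimes (x z : ℕ) : Finset ℕ :=
  (Finset.range (x + 1)).filter fun p =>
    p.Prime ∧ z < p ∧ ∀ m ∈ Finset.Icc 1 z, orderOf (m : ZMod p) ≠ p - 1

lemma mem_exceptionalPrimes {x z p : ℕ} : p ∈ exceptionalPrimes x z ↔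
    p ≤ x ∧ p.Prime ∧ z < p ∧ ∀ m ∈ Finset.Icc 1 z, orderOf (m : ZMod p) ≠ p - 1 := by
  simp only [exceptionalPrimes, Finset.mem_filter, Finset.mem_range, Nat.lt_succ_iff]

/-- For `x ≪ z ^ 8` there are only `O(z)` exceptional primes up to `x`. Amplification with
`r = 24` gives products up to `z ^ 24`, roughly `x ^ 3`, which dominates the off-diagonal cost
`x ^ 2` of the large sieve. -/
lemma card_exceptionalPrimes_le : ∃ K z₀ : ℕ, ∀ z x : ℕ, z₀ ≤ z → x ≤ (2 * z) ^ 8 →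
    (exceptionalPrimes x z).card ≤ K * z := by
  obtain ⟨K, hK1, hK⟩ := exists_card_divisors_pow_le (120 * 24)
  refine ⟨4 * K, 2 ^ 17 * K, fun z x hz hx => ?_⟩
  have hz2 : 2 ≤ z := by omega
  set E := exceptionalPrimes x z with hEdef
  -- `T` is the largest value of the divisor function up to `z ^ 24`
  obtain ⟨n₀, hn₀, hmax⟩ := Finset.exists_max_image (Finset.Icc 1 (z ^ 24))
    (fun n => n.divisors.card) ⟨1, by simp; exact Nat.one_le_pow _ _ (by omega)⟩
  set T := n₀.divisors.card with hT
  rw [Finset.mem_Icc] at hn₀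
  have hT0 : 0 < T := Finset.card_pos.2 ⟨1, by simp; omega⟩
  -- `120 = 5 * 24`: the factors `T ^ 96` (from `η ^ 2`) and `T ^ 24` (multiplicities) combine
  have hT120 : T ^ 120 ≤ K * z := by
    have h1 : (T ^ 120) ^ 24 ≤ (K * z) ^ 24 := by
      rw [← pow_mul]
      calc T ^ (120 * 24) ≤ K * n₀ := hK n₀ (by omega)
        _ ≤ K * z ^ 24 := by gcongr; exact hn₀.2
        _ ≤ K ^ 24 * z ^ 24 := by gcongr; exact Nat.le_self_pow (by norm_num) K
        _ = _ := by rw [mul_pow]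
    exact le_of_pow_le_pow_left₀ (by norm_num) (Nat.zero_le _) h1
  have hxz : x ≤ z ^ 24 := by
    calc x ≤ (2 * z) ^ 8 := hx
      _ ≤ (z * z) ^ 8 := by gcongr
      _ = z ^ 16 := by ring
      _ ≤ z ^ 24 := Nat.pow_le_pow_right (by omega) (by norm_num)
  have hEx : ∀ p ∈ E, ∃ χ : MulChar (ZMod p) ℂ, χ ≠ 1 ∧
      (z : ℝ) ≤ ‖∑ m ∈ Finset.Icc 1 z, χ (m : ZMod p)‖ * ((p - 1).divisors.card : ℝ) ^ 2 := by
    intro p hp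
    obtain ⟨-, h2, h3, h4⟩ := mem_exceptionalPrimes.1 hp
    exact exists_large_char_sum h2 (by omega) h3 h4
  choose! χ hχ1 hχ2 using hEx
  have hTR : (0 : ℝ) < T := by exact_mod_cast hT0
  have hzR : (2 : ℝ) ≤ z := by exact_mod_cast hz2
  have main := card_exceptional_sq_le (E := E) (x := x) (z := z) (r := 24) (D := T)
    (η := ((z : ℝ) / T ^ 2) ^ 24) (by positivity)
    (fun p hp => by
      obtain ⟨h1, h2, -⟩ := mem_exceptionalPrimes.1 hp
      exact ⟨h2, h1⟩) χ hχ1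
    (fun p hp => by
      obtain ⟨h1, h2, -⟩ := mem_exceptionalPrimes.1 hp
      have := h2.two_le
      gcongr
      rw [div_le_iff₀ (by positivity)]
      refine (hχ2 p hp).trans ?_
      gcongr
      exact hmax (p - 1) (Finset.mem_Icc.2 (by omega)))
    (fun n hn hn' => hmax n (Finset.mem_Icc.2 (by omega)))
  rcases Nat.eq_zero_or_pos E.card with he | he
  · rw [he]; exact Nat.zero_le _
  have heR : (0 : ℝ) < E.card := by exact_mod_cast he
  have ht120 : (T : ℝ) ^ 120 ≤ K * (z : ℝ) := by exact_mod_cast hT120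
  have hxR : (x : ℝ) ^ 2 ≤ 2 ^ 16 * (z : ℝ) ^ 16 := by
    have : (x : ℝ) ≤ (2 * (z : ℝ)) ^ 8 := by exact_mod_cast hx
    calc (x : ℝ) ^ 2 ≤ ((2 * (z : ℝ)) ^ 8) ^ 2 := by gcongr
      _ = _ := by ring
  have hwK : 2 ^ 17 * (K : ℝ) ≤ (z : ℝ) ^ 7 := by
    have h1 : 2 ^ 17 * (K : ℝ) ≤ (z : ℝ) := by exact_mod_cast hz
    exact h1.trans (le_self_pow₀ (by linarith) (by norm_num))
  set e : ℝ := (E.card : ℝ) with hedef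
  set w : ℝ := (z : ℝ) with hw
  set t : ℝ := (T : ℝ) with ht
  have hw24 : (1 : ℝ) ≤ w ^ 24 := one_le_pow₀ (by linarith)
  have hKR : (0 : ℝ) ≤ K := Nat.cast_nonneg K
  have h1 : e * w ^ 24 * (e * w ^ 24) ≤
      e * w ^ 24 * (K * w * (2 * w ^ 24 + e * (2 ^ 16 * w ^ 16))) := by
    calc e * w ^ 24 * (e * w ^ 24) = (e * (w / t ^ 2) ^ 24) ^ 2 * t ^ 96 := by
          field_simp
      _ ≤ w ^ 24 * (t ^ 24 * (e * (z ^ 24 + 1 : ℕ) + e ^ 2 * (x : ℝ) ^ 2)) * t ^ 96 := by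
          gcongr
      _ = w ^ 24 * (t ^ 120 * (e * (w ^ 24 + 1) + e ^ 2 * (x : ℝ) ^ 2)) := by
          push_cast; ring
      _ ≤ w ^ 24 * (K * w * (e * (w ^ 24 + w ^ 24) + e ^ 2 * (2 ^ 16 * w ^ 16))) := by
          gcongr
      _ = _ := by ring
  have h2 : e * w ^ 24 ≤ K * w * (2 * w ^ 24 + e * (2 ^ 16 * w ^ 16)) :=
    le_of_mul_le_mul_left h1 (by positivity)
  have h3 : K * w * (e * (2 ^ 16 * w ^ 16)) ≤ e * w ^ 24 / 2 := by
    calc K * w * (e * (2 ^ 16 * w ^ 16)) = e * w ^ 17 * (2 ^ 17 * K) / 2 := by ring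
      _ ≤ e * w ^ 17 * w ^ 7 / 2 := by gcongr
      _ = _ := by ring
  have h4 : e * w ^ 24 ≤ 4 * K * w * w ^ 24 := by linarith
  have h5 : e ≤ 4 * K * w := le_of_mul_le_mul_right h4 (by positivity)
  have h6 : (E.card : ℝ) ≤ ((4 * K * z : ℕ) : ℝ) := by push_cast; exact h5
  exact_mod_cast h6

/-- Chebyshev's lower bound for `π(x)` beats any constant multiple of `x ^ (5 / 6)`. -/
lemma eventually_rpow_le_primeCounting (L δ : ℝ) (hL : 0 < L) (hδ : 0 < δ) : ∃ x₀ : ℕ, ∀ x : ℕ, x₀ ≤ x →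
    L * (x : ℝ) ^ (5 / 6 : ℝ) ≤ δ * (Nat.primeCounting x : ℝ) := by
  have h1 := (isLittleO_log_rpow_atTop (show (0 : ℝ) < 1 / 6 by norm_num)).bound
    (show (0 : ℝ) < δ / (2 * L) by positivity)
  have h2 := Real.isLittleO_log_id_atTop.bound (show (0 : ℝ) < 1 / 40 by norm_num)
  obtain ⟨x₀, hx₀⟩ := Filter.eventually_atTop.1
    (tendsto_natCast_atTop_atTop.eventually (h1.and h2) : ∀ᶠ x : ℕ in Filter.atTop, _)
  refine ⟨max x₀ 2, fun x hx => ?_⟩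
  obtain ⟨h1, h2⟩ := hx₀ x (le_of_max_le_left hx)
  have hx2 : (2 : ℝ) ≤ x := by exact_mod_cast le_of_max_le_right hx
  have hlog : 0 < Real.log x := Real.log_pos (by linarith)
  rw [Real.norm_of_nonneg hlog.le, Real.norm_of_nonneg (by positivity)] at h1
  rw [Real.norm_of_nonneg hlog.le, id, Real.norm_of_nonneg (by linarith)] at h2
  have hpi := Chebyshev.pi_ge x
  rw [div_le_iff₀ hlog] at hpi
  have hl1 : Real.log (x + 1) ≤ 2 * Real.log x := by
    rw [← Real.log_rpow (by linarith)]
    apply Real.log_le_log (by linarith)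
    norm_num
    nlinarith
  have hl2 := Real.log_two_gt_d9
  have h3 : (x : ℝ) / 2 ≤ Nat.primeCounting x * Real.log x := by nlinarith
  have h4 : (x : ℝ) ^ (5 / 6 : ℝ) * (x : ℝ) ^ (1 / 6 : ℝ) = x := by
    rw [← Real.rpow_add (by linarith)]; norm_num
  refine le_of_mul_le_mul_right ?_ hlog
  calc L * (x : ℝ) ^ (5 / 6 : ℝ) * Real.log x
      ≤ L * (x : ℝ) ^ (5 / 6 : ℝ) * (δ / (2 * L) * (x : ℝ) ^ (1 / 6 : ℝ)) := by gcongr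
    _ = δ * (((x : ℝ) ^ (5 / 6 : ℝ) * (x : ℝ) ^ (1 / 6 : ℝ)) / 2) := by field_simp
    _ ≤ δ * (Nat.primeCounting x * Real.log x) := by rw [h4]; gcongr
    _ = _ := by ring

/-- The only numerical property of the exponent that matters; it amounts to `e ≤ 25 / 9`. -/
lemma three_div_twenty_le : (3 / 20 : ℝ) ≤ 1 / (4 * Real.sqrt (Real.exp 1)) := by
  have h : Real.sqrt (Real.exp 1) ≤ 5 / 3 := by
    rw [Real.sqrt_le_left (by norm_num)]
    have := Real.exp_one_lt_d9
    norm_num; linarith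
  have h0 : 0 < Real.sqrt (Real.exp 1) := Real.sqrt_pos.2 (Real.exp_pos 1)
  rw [div_le_div_iff₀ (by norm_num) (by positivity)]
  linarith

/-- With `z ≤ x ^ (1 / 8)`, a nonexceptional prime `p > x ^ (5 / 6)` satisfies
`g(p) ≤ z ≤ x ^ (1 / 8) = (x ^ (5 / 6)) ^ (3 / 20) ≤ p ^ (3 / 20)`. -/
lemma leastPrimRoot_le {x z p : ℕ} {θ : ℝ} (hθ : 3 / 20 ≤ θ) (hx : 1 ≤ x)
    (hz : (z : ℝ) ≤ (x : ℝ) ^ (1 / 8 : ℝ)) (hp : p.Prime) (hpx : p ≤ x)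
    (hpE : p ∉ exceptionalPrimes x z) (hpl : (x : ℝ) ^ (5 / 6 : ℝ) < p) :
    (leastPrimRoot p : ℝ) ≤ (p : ℝ) ^ θ := by
  have hxR : (1 : ℝ) ≤ x := by exact_mod_cast hx
  have hp1 : (1 : ℝ) ≤ p := by exact_mod_cast hp.one_lt.le
  have hzp : z < p := by
    have : (z : ℝ) < p := hz.trans_lt (lt_of_le_of_lt
      (Real.rpow_le_rpow_of_exponent_le hxR (by norm_num)) hpl)
    exact_mod_cast this
  have : ∃ m ∈ Finset.Icc 1 z, orderOf (m : ZMod p) = p - 1 := by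
    by_contra! hcon
    exact hpE (mem_exceptionalPrimes.2 ⟨hpx, hp, hzp, hcon⟩)
  obtain ⟨m, hm, ho⟩ := this
  rw [Finset.mem_Icc] at hm
  have h1 : leastPrimRoot p ≤ m := Nat.sInf_le ⟨hm.1, ho⟩
  calc (leastPrimRoot p : ℝ) ≤ z := by exact_mod_cast h1.trans hm.2
    _ ≤ (x : ℝ) ^ (1 / 8 : ℝ) := hz
    _ = ((x : ℝ) ^ (5 / 6 : ℝ)) ^ (3 / 20 : ℝ) := by
        rw [← Real.rpow_mul (by linarith)]; norm_num
    _ ≤ (p : ℝ) ^ (3 / 20 : ℝ) := by gcongr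
    _ ≤ _ := Real.rpow_le_rpow_of_exponent_le hp1 hθ

theorem stmt0 (ε δ : ℝ) (hε : 0 < ε) (hδ : 0 < δ) :
    ∃ y : ℝ, 0 < y ∧ ∃ C : ℝ, 0 < C ∧ ∃ x₀ : ℕ, ∀ x : ℕ, x₀ ≤ x →
      (1 - δ) * ({p : ℕ | p ≤ x ∧ p.Prime ∧ IsRough y p}.ncard : ℝ) ≤
        ({p : ℕ | p ≤ x ∧ p.Prime ∧ IsRough y p ∧
            (leastPrimRoot p : ℝ) ≤
              C * (p : ℝ) ^ (1 / (4 * Real.sqrt (Real.exp 1)) + ε)}.ncard : ℝ) := by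
  obtain ⟨K, z₀, hK⟩ := card_exceptionalPrimes_le
  obtain ⟨x₁, hx₁⟩ := eventually_rpow_le_primeCounting (K + 2) δ (by positivity) hδ
  -- with `y = 1` every prime is rough, and `C = 1` suffices
  refine ⟨1, one_pos, 1, one_pos, max x₁ ((z₀ + 1) ^ 8), fun x hx => ?_⟩
  have hxz : (z₀ + 1) ^ 8 ≤ x := le_of_max_le_right hx
  have hx1 : 1 ≤ x := (Nat.one_le_pow _ _ (Nat.succ_pos _)).trans hxz
  have hxR : (1 : ℝ) ≤ x := by exact_mod_cast hx1
  have hrough : ∀ p, IsRough 1 p := fun p q hq _ _ => by exact_mod_cast hq.one_lt.le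
  simp only [hrough, true_and, and_true, one_mul]
  set θ := 1 / (4 * Real.sqrt (Real.exp 1)) + ε with hθ
  have hθ1 : 3 / 20 ≤ θ := by linarith [three_div_twenty_le]
  set A : Set ℕ := {p : ℕ | p ≤ x ∧ p.Prime} with hA
  set B : Set ℕ := {p : ℕ | p ≤ x ∧ p.Prime ∧ (leastPrimRoot p : ℝ) ≤ (p : ℝ) ^ θ} with hB
  set z := ⌊(x : ℝ) ^ (1 / 8 : ℝ)⌋₊ with hz
  have hzle : (z : ℝ) ≤ (x : ℝ) ^ (1 / 8 : ℝ) := Nat.floor_le (by positivity)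
  have hzlt : (x : ℝ) ^ (1 / 8 : ℝ) < z + 1 := Nat.lt_floor_add_one _
  have hx8 : ((x : ℝ) ^ (1 / 8 : ℝ)) ^ 8 = x := by
    rw [← Real.rpow_natCast, ← Real.rpow_mul (by linarith)]; norm_num
  have hz0 : z₀ + 1 ≤ z := by
    apply Nat.le_floor
    refine le_of_pow_le_pow_left₀ (n := 8) (by norm_num) (by positivity) ?_
    rw [hx8]; exact_mod_cast hxz
  have hx2z : x ≤ (2 * z) ^ 8 := by
    have h1 : (1 : ℝ) ≤ z := by exact_mod_cast (show 1 ≤ z by omega)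
    have : (x : ℝ) ≤ (2 * z) ^ 8 := by
      rw [← hx8]; gcongr; linarith
    exact_mod_cast this
  have hE := hK z x (by omega) hx2z
  have hAB : A ⊆ B ∪ ↑(Finset.range (⌊(x : ℝ) ^ (5 / 6 : ℝ)⌋₊ + 1) ∪ exceptionalPrimes x z) := by
    rintro p ⟨hpx, hp⟩
    by_cases hpE : p ∈ exceptionalPrimes x z
    · right; simp [hpE]
    rcases le_or_gt (p : ℝ) ((x : ℝ) ^ (5 / 6 : ℝ)) with hl | hl
    · right
      have : p < ⌊(x : ℝ) ^ (5 / 6 : ℝ)⌋₊ + 1 := Nat.lt_succ_of_le (Nat.le_floor hl)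
      simp [this]
    · left
      exact ⟨hpx, hp, leastPrimRoot_le hθ1 hx1 hzle hp hpx hpE hl⟩
  have hBfin : B.Finite := (Set.finite_Iic x).subset fun p hp => hp.1
  have hcard : A.ncard ≤ B.ncard + (⌊(x : ℝ) ^ (5 / 6 : ℝ)⌋₊ + 1 + K * z) := by
    refine (Set.ncard_le_ncard hAB (hBfin.union (Finset.finite_toSet _))).trans
      ((Set.ncard_union_le _ _).trans ?_)
    gcongr
    rw [Set.ncard_coe_finset]
    refine (Finset.card_union_le _ _).trans ?_
    rw [Finset.card_range]
    gcongr
  have hAc : A.ncard = Nat.primeCounting x := by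
    rw [Nat.primeCounting, Nat.primeCounting', Nat.count_eq_card_filter_range,
      ← Set.ncard_coe_finset]
    congr 1
    ext p
    simp [hA]
  have hfin := hx₁ x (le_of_max_le_left hx)
  rw [← hAc] at hfin
  have hcR : (A.ncard : ℝ) ≤ B.ncard + (⌊(x : ℝ) ^ (5 / 6 : ℝ)⌋₊ + 1 + K * z) := by
    exact_mod_cast hcard
  have h1 : (⌊(x : ℝ) ^ (5 / 6 : ℝ)⌋₊ : ℝ) ≤ (x : ℝ) ^ (5 / 6 : ℝ) := Nat.floor_le (by positivity)
  have h2 : (1 : ℝ) ≤ (x : ℝ) ^ (5 / 6 : ℝ) := Real.one_le_rpow hxR (by norm_num)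
  have h3 : (K : ℝ) * z ≤ K * (x : ℝ) ^ (5 / 6 : ℝ) := by
    gcongr
    exact hzle.trans (Real.rpow_le_rpow_of_exponent_le hxR (by norm_num))
  linarith
end

section
/- For every ε > 0 there exist constants c > 0, C > 0 and x₀ such that for all x ≥ x₀: the number of primes p ≤ x satisfying g(p) ≤ C·p^(1/(4√e)+ε) is at least c·π(x). -/
open Finset


/-! ### Arithmetic functions -/

/-- The divisor bound `τ(n) ≪ n ^ (1 / k)`. In the product over the primes `p ∣ n` of
`(v + 1) ^ k / p ^ v`, a factor is at most `1` once `2 ^ k ≤ p`, and is bounded for the fewer than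
`2 ^ k` remaining primes. -/
theorem card_divisors_pow_le (k : ℕ) : ∃ C : ℕ, 0 < C ∧ ∀ n : ℕ, n ≠ 0 → #n.divisors ^ k ≤ C * n := by
  obtain ⟨M, hM1, hM⟩ : ∃ M : ℕ, 1 ≤ M ∧ ∀ v : ℕ, (v + 1) ^ k ≤ M * 2 ^ v := by
    have h := tendsto_pow_const_div_const_pow_of_one_lt k (r := (2:ℝ)) (by norm_num)
    obtain ⟨B, hB⟩ := h.bddAbove_range
    refine ⟨⌈2 * B⌉₊ + 1, by omega, fun v => ?_⟩
    have h1 : ((v + 1 : ℕ) : ℝ) ^ k / 2 ^ (v + 1) ≤ B := hB ⟨v + 1, rfl⟩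
    rw [div_le_iff₀ (by positivity), pow_succ] at h1
    have h2 : 2 * B ≤ ⌈2 * B⌉₊ := Nat.le_ceil _
    have h3 : (0:ℝ) < 2 ^ v := by positivity
    have : (((v + 1) ^ k : ℕ) : ℝ) ≤ (((⌈2 * B⌉₊ + 1) * 2 ^ v : ℕ) : ℝ) := by
      push_cast at h1 ⊢
      nlinarith
    exact_mod_cast this
  refine ⟨M ^ (2 ^ k), by positivity, fun n hn => ?_⟩
  rw [Nat.card_divisors hn, ← Finset.prod_pow]
  have key : ∀ p ∈ n.primeFactors, (n.factorization p + 1) ^ k ≤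
      (if p < 2 ^ k then M else 1) * p ^ n.factorization p := by
    intro p hp
    have hp2 := (Nat.prime_of_mem_primeFactors hp).two_le
    split_ifs with h
    · exact (hM _).trans (Nat.mul_le_mul_left _ (Nat.pow_le_pow_left hp2 _))
    · rw [one_mul]
      calc (n.factorization p + 1) ^ k ≤ (2 ^ n.factorization p) ^ k :=
            Nat.pow_le_pow_left (Nat.lt_two_pow_self) _
        _ = (2 ^ k) ^ n.factorization p := by rw [← pow_mul, ← pow_mul, mul_comm]
        _ ≤ _ := Nat.pow_le_pow_left (not_lt.1 h) _
  refine (Finset.prod_le_prod' key).trans ?_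
  rw [Finset.prod_mul_distrib]
  have e : ∏ p ∈ n.primeFactors, p ^ n.factorization p = n := Nat.prod_factorization_pow_eq_self hn
  rw [e]
  refine Nat.mul_le_mul_right _ ?_
  rw [← Finset.prod_filter, Finset.prod_const]
  refine Nat.pow_le_pow_right hM1 ?_
  calc _ ≤ #(range (2 ^ k)) := Finset.card_le_card (fun p hp => by
        simp only [mem_filter] at hp; simpa using hp.2)
    _ = _ := by simp

theorem le_card_divisors_mul_totient (m : ℕ) : m ≤ #m.divisors * m.totient := by
  rcases Nat.eq_zero_or_pos m with rfl | hm
  · simp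
  conv_lhs => rw [← Nat.sum_totient m]
  rw [← smul_eq_mul]
  refine Finset.sum_le_card_nsmul _ _ _ fun d hd => ?_
  exact Nat.le_of_dvd (Nat.totient_pos.2 hm) (Nat.totient_dvd_of_dvd (Nat.dvd_of_mem_divisors hd))

theorem sum_moebius_div_s2 (m : ℕ) (hm : 0 < m) :
    ∑ d ∈ m.divisors, (ArithmeticFunction.moebius d : ℝ) / d = m.totient / m := by
  have h := (ArithmeticFunction.sum_eq_iff_sum_mul_moebius_eq (R := ℝ)
    (f := fun n => (n.totient : ℝ)) (g := fun n => (n : ℝ))).1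
    (fun n _ => by exact_mod_cast Nat.sum_totient n) m hm
  rw [eq_div_iff (by positivity), ← h, Nat.sum_divisorsAntidiagonal
    (f := fun a b => (ArithmeticFunction.moebius a : ℝ) * (b : ℝ)), Finset.sum_mul]
  refine Finset.sum_congr rfl fun d hd => ?_
  have hdm := Nat.dvd_of_mem_divisors hd
  have : (d : ℝ) ≠ 0 := by exact_mod_cast (Nat.pos_of_mem_divisors hd).ne'
  rw [Nat.cast_div hdm this]
  ring

/-- Möbius detection of elements of maximal order: `g ^ (m / d) = 1` means that `d` divides the
index `m / orderOf g`. -/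
theorem sum_moebius_indicator {M : Type*} [Monoid M] [DecidableEq M] (g : M) (m : ℕ) (hm : 0 < m) (hg : orderOf g ∣ m) :
    ∑ d ∈ m.divisors, (ArithmeticFunction.moebius d : ℝ) * (if g ^ (m / d) = 1 then 1 else 0) =
      if orderOf g = m then 1 else 0 := by
  obtain ⟨k, rfl⟩ := hg
  have ho : 0 < orderOf g := Nat.pos_of_mul_pos_right hm
  have hk : 0 < k := Nat.pos_of_mul_pos_left hm
  have h1 : ∑ d ∈ k.divisors, ArithmeticFunction.moebius d = if k = 1 then 1 else 0 := by
    rw [← ArithmeticFunction.coe_mul_zeta_apply, ArithmeticFunction.moebius_mul_coe_zeta,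
      ArithmeticFunction.one_apply]
  have h2 : (orderOf g * k).divisors.filter (fun d => g ^ (orderOf g * k / d) = 1) = k.divisors := by
    ext d
    simp only [mem_filter, Nat.mem_divisors]
    constructor
    · rintro ⟨⟨⟨e, he⟩, h0⟩, h⟩
      have hd : 0 < d := Nat.pos_of_ne_zero (by rintro rfl; rw [zero_mul] at he; omega)
      rw [he, Nat.mul_div_cancel_left _ hd, ← orderOf_dvd_iff_pow_eq_one] at h
      obtain ⟨f, rfl⟩ := h
      refine ⟨⟨f, ?_⟩, hk.ne'⟩
      apply Nat.eq_of_mul_eq_mul_left ho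
      rw [he]; ring
    · rintro ⟨⟨e, rfl⟩, h⟩
      have hd : 0 < d := Nat.pos_of_mul_pos_right hk
      refine ⟨⟨⟨orderOf g * e, by ring⟩, hm.ne'⟩, ?_⟩
      rw [show orderOf g * (d * e) = d * (orderOf g * e) by ring, Nat.mul_div_cancel_left _ hd,
        pow_mul, pow_orderOf_eq_one, one_pow]
  simp_rw [mul_ite, mul_one, mul_zero]
  rw [← Finset.sum_filter, h2]
  have h3 : (orderOf g = orderOf g * k) ↔ k = 1 := by
    constructor
    · intro h; exact Nat.eq_of_mul_eq_mul_left ho (by rw [mul_one]; exact h.symm)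
    · rintro rfl; simp
  simp_rw [h3]
  exact_mod_cast h1

/-! ### A large character sum when there is no small primitive root -/

theorem exists_char_injective (p : ℕ) [Fact p.Prime] :
    ∃ χ : MulChar (ZMod p) ℂ, orderOf χ = p - 1 ∧ ∀ a : ZMod p, χ a = 1 → a = 1 := by
  have hp := (Fact.out : p.Prime)
  have hc : Fintype.card (ZMod p)ˣ = p - 1 := ZMod.card_units p
  obtain ⟨χ, hχ⟩ := MulChar.exists_mulChar_orderOf_eq_card_units (ZMod p)
    (Complex.isPrimitiveRoot_exp (Fintype.card (ZMod p)ˣ) Fintype.card_ne_zero)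
  refine ⟨χ, hχ.trans hc, fun a ha => ?_⟩
  have ha0 : a ≠ 0 := by
    rintro rfl
    rw [MulChar.map_zero] at ha
    exact zero_ne_one ha
  obtain ⟨g, hg⟩ := IsCyclic.exists_generator (α := (ZMod p)ˣ)
  obtain ⟨k, hk⟩ := (mem_powers_iff_mem_zpowers (x := g)).2 (hg (Units.mk0 a ha0))
  simp only at hk
  have hk' : ((g : ZMod p)) ^ k = a := by
    have := congrArg (fun u : (ZMod p)ˣ => (u : ZMod p)) hk
    simpa using this
  have h1 : χ ^ k = 1 := by
    rw [MulChar.eq_iff hg, MulChar.pow_apply_coe, MulChar.one_apply_coe, ← map_pow, hk', ha]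
  have h2 : Fintype.card (ZMod p)ˣ ∣ k := by
    rw [← hχ]; exact orderOf_dvd_of_pow_eq_one h1
  obtain ⟨t, rfl⟩ := h2
  rw [← hk', pow_mul, ← Units.val_pow_eq_pow_val, pow_card_eq_one]
  simp

/-- The condition `a ^ ((p - 1) / d) = 1` is detected by the `d` powers of `χ ^ ((p - 1) / d)`, via a
geometric sum. -/
theorem sum_char_pow_eq (p : ℕ) [Fact p.Prime] (χ : MulChar (ZMod p) ℂ)
    (hinj : ∀ a : ZMod p, χ a = 1 → a = 1) (d : ℕ) (hd : d ∈ (p - 1).divisors) (a : ZMod p)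
    (ha : a ≠ 0) :
    ∑ j ∈ range d, (χ ^ ((p - 1) / d * j)) a = if a ^ ((p - 1) / d) = 1 then (d : ℂ) else 0 := by
  have hdvd := Nat.dvd_of_mem_divisors hd
  have hu : IsUnit a := ha.isUnit
  obtain ⟨u, rfl⟩ := hu
  simp_rw [pow_mul, MulChar.pow_apply_coe, ← map_pow χ]
  split_ifs with h
  · rw [h]; simp
  · have h1 : χ ((u : ZMod p) ^ ((p - 1) / d)) ≠ 1 := fun h' => h (hinj _ h')
    simp_rw [map_pow χ _ _] at h1 ⊢
    rw [geom_sum_eq h1, ← map_pow, ← map_pow, ← pow_mul, Nat.div_mul_cancel hdvd,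
      ZMod.pow_card_sub_one_eq_one ha]
    simp

/-- If none of `1, …, y` is a primitive root modulo `p`, then some nontrivial character has a sum of
length `y` that is nearly as large as the trivial bound. Otherwise the trivial characters would
contribute `y φ(p - 1) / (p - 1) ≥ y / τ(p - 1)` to the number of primitive roots up to `y`, and the
nontrivial ones strictly less than that. -/
theorem exists_large_charSum (p : ℕ) [Fact p.Prime] (y : ℕ) (hy : 0 < y) (hyp : y < p)
    (hbad : ∀ n ∈ Icc 1 y, orderOf (n : ZMod p) ≠ p - 1) :
    ∃ χ : MulChar (ZMod p) ℂ, χ ≠ 1 ∧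
      (y : ℝ) ≤ (#(p - 1).divisors : ℝ) ^ 2 * ‖∑ n ∈ Icc 1 y, χ (n : ZMod p)‖ := by
  by_contra! hcon
  have hp := (Fact.out : p.Prime)
  set m := p - 1 with hm
  have hm0 : 0 < m := by have := hp.two_le; omega
  obtain ⟨χ, hord, hinj⟩ := exists_char_injective p
  set D : ℝ := (#m.divisors : ℝ) with hD
  have hDpos : 0 < D := by
    rw [hD]; exact_mod_cast Finset.card_pos.2 ⟨1, Nat.one_mem_divisors.2 hm0.ne'⟩
  have hne : ∀ n ∈ Icc 1 y, (n : ZMod p) ≠ 0 := by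
    intro n hn h
    rw [ZMod.natCast_eq_zero_iff] at h
    rw [mem_Icc] at hn
    have := Nat.le_of_dvd (by omega) h
    omega
  let c : ℕ → ℝ := fun d => ∑ n ∈ Icc 1 y, (if (n : ZMod p) ^ (m / d) = 1 then (1:ℝ) else 0)
  have hy0 : (0:ℝ) < y := by exact_mod_cast hy
  -- The trivial character contributes exactly `y / d` to `c d`.
  have hc : ∀ d ∈ m.divisors, |c d - y / d| < y / D ^ 2 := by
    intro d hd
    have hd0 := Nat.pos_of_mem_divisors hd
    have hdR : (0:ℝ) < d := by exact_mod_cast hd0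
    have h1 : ((d * c d : ℝ) : ℂ) = ∑ j ∈ range d, ∑ n ∈ Icc 1 y, (χ ^ (m / d * j)) (n : ZMod p) := by
      rw [Finset.sum_comm]
      push_cast [c]
      rw [Finset.mul_sum]
      refine Finset.sum_congr rfl fun n hn => ?_
      rw [sum_char_pow_eq p χ hinj d hd _ (hne n hn), ← hm]
      split_ifs <;> simp
    obtain ⟨e, rfl⟩ : ∃ e, d = e + 1 := ⟨d - 1, by omega⟩
    rw [Finset.sum_range_succ'] at h1
    have h0 : ∑ n ∈ Icc 1 y, (χ ^ (m / (e + 1) * 0)) (n : ZMod p) = y := by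
      rw [Finset.sum_congr rfl (g := fun _ => (1:ℂ))]
      · simp
      · intro n hn
        rw [mul_zero, pow_zero]
        exact MulChar.one_apply (hne n hn).isUnit
    rw [h0] at h1
    have h2 : ∀ j ∈ range e, ‖∑ n ∈ Icc 1 y, (χ ^ (m / (e + 1) * (j + 1))) (n : ZMod p)‖ ≤ y / D ^ 2 := by
      intro j hj
      rw [mem_range] at hj
      rw [le_div_iff₀ (by positivity), mul_comm]
      refine (hcon _ ?_).le
      intro h
      have h3 := orderOf_dvd_of_pow_eq_one h
      rw [hord] at h3
      have h4 : m / (e + 1) * (e + 1) = m := Nat.div_mul_cancel (Nat.dvd_of_mem_divisors hd)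
      have hq : 0 < m / (e + 1) := Nat.pos_of_ne_zero (by intro h; rw [h] at h4; omega)
      have h5 := Nat.le_of_dvd (by positivity) h3
      rw [← hm] at h5
      have h6 : m / (e + 1) * (j + 1) < m / (e + 1) * (e + 1) := Nat.mul_lt_mul_of_pos_left (by omega) hq
      omega
    have h3 : ‖(((e + 1 : ℕ) : ℝ) * c (e + 1) - y : ℂ)‖ ≤ e * (y / D ^ 2) := by
      have : (((e + 1 : ℕ) : ℝ) * c (e + 1) - y : ℂ) =
          ∑ j ∈ range e, ∑ n ∈ Icc 1 y, (χ ^ (m / (e + 1) * (j + 1))) (n : ZMod p) := by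
        rw [← Complex.ofReal_mul, h1]; ring
      rw [this]
      refine (norm_sum_le_of_le _ h2).trans ?_
      simp
    have h4 : |((e + 1 : ℕ) : ℝ) * c (e + 1) - y| ≤ e * (y / D ^ 2) := by
      rw [← Real.norm_eq_abs, ← Complex.norm_real]
      push_cast at h3 ⊢
      exact h3
    have h5 : c (e + 1) - y / ((e + 1 : ℕ) : ℝ) = (((e + 1 : ℕ) : ℝ) * c (e + 1) - y) / ((e + 1 : ℕ) : ℝ) := by
      field_simp
    rw [h5, abs_div, abs_of_pos hdR, div_lt_iff₀ hdR]
    refine h4.trans_lt ?_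
    rw [mul_comm]
    have : 0 < y / D ^ 2 := by positivity
    apply mul_lt_mul_of_pos_left _ this
    push_cast; linarith
  have hsum : ∑ d ∈ m.divisors, (ArithmeticFunction.moebius d : ℝ) * c d = 0 := by
    simp only [c, Finset.mul_sum]
    rw [Finset.sum_comm]
    refine Finset.sum_eq_zero fun n hn => ?_
    rw [sum_moebius_indicator (n : ZMod p) m hm0
      (orderOf_dvd_of_pow_eq_one (ZMod.pow_card_sub_one_eq_one (hne n hn))), if_neg (hbad n hn)]
  have h1 : (y : ℝ) * (m.totient / m) =
      - ∑ d ∈ m.divisors, (ArithmeticFunction.moebius d : ℝ) * (c d - y / d) := by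
    rw [← sum_moebius_div_s2 m hm0, Finset.mul_sum]
    simp_rw [mul_sub]
    rw [Finset.sum_sub_distrib, hsum, zero_sub, neg_neg]
    exact Finset.sum_congr rfl fun d _ => by ring
  have h2 : |∑ d ∈ m.divisors, (ArithmeticFunction.moebius d : ℝ) * (c d - y / d)| < D * (y / D ^ 2) := by
    refine (Finset.abs_sum_le_sum_abs _ _).trans_lt ?_
    have : D * (y / D ^ 2) = ∑ d ∈ m.divisors, y / D ^ 2 := by simp [hD]
    rw [this]
    refine Finset.sum_lt_sum_of_nonempty ⟨1, Nat.one_mem_divisors.2 hm0.ne'⟩ fun d hd => ?_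
    rw [abs_mul]
    refine lt_of_le_of_lt ?_ (hc d hd)
    refine mul_le_of_le_one_left (abs_nonneg _) ?_
    exact_mod_cast ArithmeticFunction.abs_moebius_le_one
  have h3 : (y : ℝ) / D ≤ y * (m.totient / m) := by
    rw [div_eq_mul_inv]
    refine mul_le_mul_of_nonneg_left ?_ hy0.le
    have hmR : (0:ℝ) < m := by exact_mod_cast hm0
    rw [inv_eq_one_div, div_le_div_iff₀ hDpos hmR, one_mul, hD, mul_comm]
    exact_mod_cast le_card_divisors_mul_totient m
  have h4 : D * (y / D ^ 2) = y / D := by field_simp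
  rw [h4] at h2
  have h5 := neg_le_abs (∑ d ∈ m.divisors, (ArithmeticFunction.moebius d : ℝ) * (c d - y / d))
  linarith

/-! ### An elementary large sieve -/

theorem sum_zmod_prod_eq {p q : ℕ} [NeZero p] [NeZero q] (hpq : p.Coprime q) (f : ZMod p → ℂ) (g : ZMod q → ℂ) :
    ∑ n ∈ range (p * q), f n * g n = (∑ a, f a) * ∑ b, g b := by
  have : NeZero (p * q) := ⟨mul_ne_zero (NeZero.ne p) (NeZero.ne q)⟩
  rw [Finset.sum_mul_sum, ← Finset.sum_product', Finset.univ_product_univ,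
    ← (ZMod.chineseRemainder hpq).toEquiv.sum_comp]
  refine Finset.sum_bij' (fun n _ => (n : ZMod (p * q))) (fun a _ => a.val) ?_ ?_ ?_ ?_ ?_
  · intros; simp
  · intro a _; simpa using ZMod.val_lt a
  · intro n hn; exact ZMod.val_cast_of_lt (by simpa using hn)
  · intro a _; simp
  · intro n hn; simp

theorem norm_sum_periodic_le (f : ℕ → ℂ) (Q : ℕ) (hQ : 0 < Q) (hf : ∀ n, ‖f n‖ ≤ 1)
    (hper : ∀ n, f (n + Q) = f n) (h0 : ∑ n ∈ range Q, f n = 0) (N : ℕ) :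
    ‖∑ n ∈ range N, f n‖ ≤ Q := by
  have hper' : ∀ k n, f (Q * k + n) = f n := by
    intro k
    induction k with
    | zero => simp
    | succ k ih => intro n; rw [← ih n, ← hper (Q * k + n)]; congr 1; ring
  have hz : ∀ k, ∑ n ∈ range (Q * k), f n = 0 := by
    intro k
    induction k with
    | zero => simp
    | succ k ih =>
      rw [Nat.mul_succ, Finset.sum_range_add, ih, zero_add]
      simp_rw [hper', h0]
  rw [← Nat.div_add_mod N Q, Finset.sum_range_add, hz, zero_add]
  refine (norm_sum_le_of_le _ (fun n _ => hf _)).trans ?_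
  simp only [sum_const, card_range, nsmul_eq_mul, mul_one]
  exact_mod_cast (Nat.mod_lt N hQ).le

/-- Quasi-orthogonality of characters to distinct prime moduli: the product is periodic modulo `pq`
with mean zero. -/
theorem norm_sum_char_mul_conj_le {p q : ℕ} [Fact p.Prime] [Fact q.Prime] (hpq : p ≠ q)
    (χ : MulChar (ZMod p) ℂ) (ψ : MulChar (ZMod q) ℂ) (hχ : χ ≠ 1) (N : ℕ) :
    ‖∑ n ∈ Icc 1 N, χ (n : ZMod p) * starRingEnd ℂ (ψ (n : ZMod q))‖ ≤ (p * q : ℕ) := by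
  have hp := (Fact.out : p.Prime)
  have hq := (Fact.out : q.Prime)
  -- The term `n = 0` vanishes, so it may be added.
  have e : ∑ n ∈ Icc 1 N, χ (n : ZMod p) * starRingEnd ℂ (ψ (n : ZMod q)) =
      ∑ n ∈ range (N + 1), χ (n : ZMod p) * starRingEnd ℂ (ψ (n : ZMod q)) := by
    rw [Finset.range_eq_Ico, Finset.sum_eq_sum_Ico_succ_bot (Nat.succ_pos N)]
    simp only [Nat.cast_zero, MulChar.map_zero, zero_mul, zero_add]
    rfl
  rw [e]
  refine norm_sum_periodic_le (fun n : ℕ => χ (n : ZMod p) * starRingEnd ℂ (ψ (n : ZMod q))) (p * q)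
    (Nat.mul_pos hp.pos hq.pos) ?_ ?_ ?_ _
  · intro n
    rw [norm_mul, RCLike.norm_conj]
    exact mul_le_one₀ (DirichletCharacter.norm_le_one χ _) (norm_nonneg _) (DirichletCharacter.norm_le_one ψ _)
  · intro n; simp
  · rw [sum_zmod_prod_eq ((Nat.coprime_primes hp hq).2 hpq) (fun a => χ a) (fun b => starRingEnd ℂ (ψ b)),
      MulChar.sum_eq_zero_of_ne_one hχ, zero_mul]

/-- Large sieve inequality for a family of bounded functions whose pairwise correlations are at most
`Q`, proved by duality. -/
theorem sum_norm_sq_le {ι : Type*} [DecidableEq ι] (B : Finset ι) (f : ι → ℕ → ℂ) (N : ℕ) (Q : ℝ) (hQ : 0 ≤ Q)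
    (hf : ∀ i ∈ B, ∀ n, ‖f i n‖ ≤ 1)
    (horth : ∀ i ∈ B, ∀ j ∈ B, i ≠ j → ‖∑ n ∈ Icc 1 N, f i n * starRingEnd ℂ (f j n)‖ ≤ Q)
    (w : ℕ → ℝ) :
    ∑ i ∈ B, ‖∑ n ∈ Icc 1 N, (w n : ℂ) * f i n‖ ^ 2 ≤ (∑ n ∈ Icc 1 N, w n ^ 2) * (N + Q * #B) := by
  -- The dual sum is taken with coefficients `conj (T i)`, so that `E = ∑ w n * g n`.
  let T : ι → ℂ := fun i => ∑ n ∈ Icc 1 N, (w n : ℂ) * f i n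
  let g : ℕ → ℂ := fun n => ∑ i ∈ B, starRingEnd ℂ (T i) * f i n
  set E : ℝ := ∑ i ∈ B, ‖T i‖ ^ 2 with hE
  change E ≤ _
  have hE0 : 0 ≤ E := Finset.sum_nonneg fun i _ => by positivity
  have hW0 : 0 ≤ ∑ n ∈ Icc 1 N, w n ^ 2 := Finset.sum_nonneg fun i _ => by positivity
  have h1 : (E : ℂ) = ∑ n ∈ Icc 1 N, (w n : ℂ) * g n := by
    simp only [g, Finset.mul_sum, hE]
    rw [Finset.sum_comm]
    push_cast
    refine Finset.sum_congr rfl fun i _ => ?_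
    rw [← Complex.conj_mul']
    conv_lhs => rw [show T i = ∑ n ∈ Icc 1 N, (w n : ℂ) * f i n from rfl]
    rw [Finset.mul_sum]
    refine Finset.sum_congr rfl fun n _ => ?_
    simp only [T]; ring
  have h2 : E ≤ ∑ n ∈ Icc 1 N, |w n| * ‖g n‖ := by
    have : E = ‖(E : ℂ)‖ := by rw [Complex.norm_real, Real.norm_of_nonneg hE0]
    rw [this, h1]
    refine norm_sum_le_of_le _ fun n _ => ?_
    rw [norm_mul, Complex.norm_real, Real.norm_eq_abs]
  have h3 : E ^ 2 ≤ (∑ n ∈ Icc 1 N, w n ^ 2) * ∑ n ∈ Icc 1 N, ‖g n‖ ^ 2 := by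
    refine (pow_le_pow_left₀ hE0 h2 2).trans ((Finset.sum_mul_sq_le_sq_mul_sq _ _ _).trans ?_)
    simp_rw [sq_abs]
    exact le_rfl
  have h4 : ((∑ n ∈ Icc 1 N, ‖g n‖ ^ 2 : ℝ) : ℂ) =
      ∑ i ∈ B, ∑ j ∈ B, (starRingEnd ℂ (T i) * T j) * ∑ n ∈ Icc 1 N, f i n * starRingEnd ℂ (f j n) := by
    push_cast
    simp_rw [← Complex.mul_conj', g, map_sum, Finset.sum_mul_sum, Finset.mul_sum]
    rw [Finset.sum_comm]
    refine Finset.sum_congr rfl fun i _ => ?_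
    rw [Finset.sum_comm]
    refine Finset.sum_congr rfl fun j _ => ?_
    refine Finset.sum_congr rfl fun n _ => ?_
    simp only [map_mul, Complex.conj_conj]
    ring
  have h5 : ∑ n ∈ Icc 1 N, ‖g n‖ ^ 2 ≤ ∑ i ∈ B, ∑ j ∈ B, (‖T i‖ * ‖T j‖) * ((if i = j then (N:ℝ) else 0) + Q) := by
    have hn : 0 ≤ ∑ n ∈ Icc 1 N, ‖g n‖ ^ 2 := Finset.sum_nonneg fun i _ => by positivity
    rw [← Real.norm_of_nonneg hn, ← Complex.norm_real, h4]
    refine norm_sum_le_of_le _ fun i hi => norm_sum_le_of_le _ fun j hj => ?_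
    rw [norm_mul, norm_mul, RCLike.norm_conj]
    refine mul_le_mul_of_nonneg_left ?_ (by positivity)
    split_ifs with h
    · subst h
      have : ‖∑ n ∈ Icc 1 N, f i n * starRingEnd ℂ (f i n)‖ ≤ ∑ n ∈ Icc 1 N, (1:ℝ) := by
        refine norm_sum_le_of_le _ fun n _ => ?_
        rw [norm_mul, RCLike.norm_conj]
        exact mul_le_one₀ (hf i hi n) (norm_nonneg _) (hf i hi n)
      simp at this
      linarith
    · simpa using horth i hi j hj h
  have h6 : ∑ i ∈ B, ∑ j ∈ B, (‖T i‖ * ‖T j‖) * ((if i = j then (N:ℝ) else 0) + Q) =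
      N * E + Q * (∑ i ∈ B, ‖T i‖) ^ 2 := by
    rw [sq, Finset.sum_mul_sum, hE]
    simp_rw [mul_add, Finset.sum_add_distrib, mul_ite, mul_zero]
    congr 1
    · rw [Finset.mul_sum]
      refine Finset.sum_congr rfl fun i hi => ?_
      rw [Finset.sum_ite_eq, if_pos hi]; ring
    · simp_rw [Finset.mul_sum]
      exact Finset.sum_congr rfl fun i _ => Finset.sum_congr rfl fun j _ => by ring
  have h7 : (∑ i ∈ B, ‖T i‖) ^ 2 ≤ #B * E := sq_sum_le_card_mul_sum_sq
  have h8 : E ^ 2 ≤ (∑ n ∈ Icc 1 N, w n ^ 2) * ((N + Q * #B) * E) := by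
    refine h3.trans (mul_le_mul_of_nonneg_left ?_ hW0)
    rw [h6] at h5
    nlinarith [mul_le_mul_of_nonneg_left h7 hQ]
  rcases hE0.eq_or_lt with h | h
  · rw [← h]; positivity
  · refine le_of_mul_le_mul_right ?_ h
    nlinarith

/-- Large values estimate: a bound for the number of completely multiplicative, quasi-orthogonal
functions whose sums of length `y` are all at least `y / D ^ 2`. The large sieve is applied to the
`r`-th powers of these sums. -/
theorem card_large_le {ι : Type*} [DecidableEq ι] (B : Finset ι) (f : ι → ℕ →* ℂ) (y r D : ℕ) (Q : ℝ) (hQ : 0 ≤ Q)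
    (hf : ∀ i ∈ B, ∀ n, ‖f i n‖ ≤ 1)
    (horth : ∀ i ∈ B, ∀ j ∈ B, i ≠ j → ‖∑ n ∈ Icc 1 (y ^ r), f i n * starRingEnd ℂ (f j n)‖ ≤ Q)
    (hD : ∀ n ∈ Icc 1 (y ^ r), #n.divisors ≤ D) (hy : 0 < y)
    (hV : ∀ i ∈ B, (y : ℝ) ≤ (D : ℝ) ^ 2 * ‖∑ n ∈ Icc 1 y, f i n‖) :
    (#B : ℝ) * y ^ r ≤ D ^ (6 * r) * (y ^ r + Q * #B) := by
  classical
  set N := y ^ r with hN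
  let S : Finset (Fin r → ℕ) := Fintype.piFinset fun _ => Icc 1 y
  have hmem : ∀ t ∈ S, ∏ k, t k ∈ Icc 1 N := by
    intro t ht
    simp only [S, Fintype.mem_piFinset, mem_Icc] at ht
    rw [mem_Icc]
    refine ⟨Nat.one_le_iff_ne_zero.2 (Finset.prod_ne_zero_iff.2 fun k _ => by have := ht k; omega), ?_⟩
    calc ∏ k, t k ≤ ∏ _k : Fin r, y := Finset.prod_le_prod' fun k _ => (ht k).2
      _ = N := by simp [hN]
  -- `w n` is the number of ways to write `n` as an ordered product of `r` factors from `[1, y]`.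
  let w : ℕ → ℝ := fun n => #{t ∈ S | ∏ k, t k = n}
  have hw : ∀ n ∈ Icc 1 N, w n ≤ (D : ℝ) ^ r := by
    intro n hn
    have h1 : {t ∈ S | ∏ k, t k = n} ⊆ Fintype.piFinset fun _ : Fin r => n.divisors := by
      intro t ht
      simp only [mem_filter] at ht
      rw [Fintype.mem_piFinset]
      intro k
      rw [Nat.mem_divisors]
      rw [mem_Icc] at hn
      exact ⟨ht.2 ▸ Finset.dvd_prod_of_mem t (mem_univ k), by omega⟩
    have h2 := Finset.card_le_card h1
    rw [Fintype.card_piFinset] at h2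
    simp only [prod_const, card_univ, Fintype.card_fin] at h2
    have h3 := h2.trans (Nat.pow_le_pow_left (hD n hn) r)
    simp only [w]
    exact_mod_cast h3
  have hT : ∀ i, (∑ n ∈ Icc 1 y, f i n) ^ r = ∑ n ∈ Icc 1 N, (w n : ℂ) * f i n := by
    intro i
    have h1 : (∑ n ∈ Icc 1 y, f i n) ^ r = ∑ t ∈ S, f i (∏ k, t k) := by
      have := Finset.prod_univ_sum (ι := Fin r) (fun _ => Icc 1 y) (fun _ n => f i n)
      simp only [prod_const, card_univ, Fintype.card_fin] at this
      rw [this]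
      exact Finset.sum_congr rfl fun t _ => by rw [map_prod]
    rw [h1, ← Finset.sum_fiberwise_of_maps_to hmem]
    refine Finset.sum_congr rfl fun n _ => ?_
    rw [Finset.sum_congr rfl (g := fun _ => f i n)]
    · simp [w]
    · intro t ht
      rw [(mem_filter.1 ht).2]
  have hls := sum_norm_sq_le B (fun i n => f i n) N Q hQ hf horth w
  have hws : ∑ n ∈ Icc 1 N, w n ^ 2 ≤ N * ((D : ℝ) ^ r) ^ 2 := by
    have := Finset.sum_le_card_nsmul (Icc 1 N) (fun n => w n ^ 2) (((D : ℝ) ^ r) ^ 2)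
      (fun n hn => pow_le_pow_left₀ (by simp [w]) (hw n hn) 2)
    simpa using this
  have hNpos : (0:ℝ) < N := by rw [hN]; positivity
  have hlow : ∀ i ∈ B, (N : ℝ) ^ 2 ≤ (D : ℝ) ^ (4 * r) * ‖∑ n ∈ Icc 1 N, (w n : ℂ) * f i n‖ ^ 2 := by
    intro i hi
    rw [← hT, norm_pow]
    calc (N : ℝ) ^ 2 = (y : ℝ) ^ (r * 2) := by rw [hN]; push_cast; ring
      _ ≤ ((D : ℝ) ^ 2 * ‖∑ n ∈ Icc 1 y, f i n‖) ^ (r * 2) := pow_le_pow_left₀ (by positivity) (hV i hi) _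
      _ = _ := by ring
  have hfin : (#B : ℝ) * N ^ 2 ≤ D ^ (4 * r) * (N * ((D : ℝ) ^ r) ^ 2 * (N + Q * #B)) := by
    calc (#B : ℝ) * N ^ 2 = ∑ i ∈ B, (N : ℝ) ^ 2 := by simp
      _ ≤ ∑ i ∈ B, (D : ℝ) ^ (4 * r) * ‖∑ n ∈ Icc 1 N, (w n : ℂ) * f i n‖ ^ 2 := Finset.sum_le_sum hlow
      _ = (D : ℝ) ^ (4 * r) * ∑ i ∈ B, ‖∑ n ∈ Icc 1 N, (w n : ℂ) * f i n‖ ^ 2 := by rw [Finset.mul_sum]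
      _ ≤ _ := by
        refine mul_le_mul_of_nonneg_left (hls.trans ?_) (by positivity)
        exact mul_le_mul_of_nonneg_right hws (by positivity)
  have e : ((y : ℝ) ^ r) = N := by rw [hN]; push_cast; rfl
  rw [e]
  refine le_of_mul_le_mul_right ?_ hNpos
  calc (#B : ℝ) * N * N = #B * N ^ 2 := by ring
    _ ≤ _ := hfin
    _ = _ := by ring

/-! ### Counting primes -/

/-- `π(x) / √x` tends to infinity, by Chebyshev's lower bound. -/
theorem exists_sqrt_le_primeCounting (K : ℝ) :
    ∃ x₀ : ℕ, ∀ x : ℕ, x₀ ≤ x → K * √(x : ℝ) ≤ x.primeCounting := by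
  refine ⟨⌈(max 4 (8 * K)) ^ 4⌉₊, fun x hx => ?_⟩
  have hx' : (max 4 (8 * K)) ^ 4 ≤ (x : ℝ) := (Nat.le_ceil _).trans (by exact_mod_cast hx)
  set u : ℝ := (x : ℝ) ^ (1 / 4 : ℝ) with hu
  have hu4 : u ^ 4 = x := by
    rw [hu, ← Real.rpow_natCast, ← Real.rpow_mul (by positivity)]; norm_num
  have hu0 : 0 ≤ u := by positivity
  have hmu : max 4 (8 * K) ≤ u := by
    rw [← hu4] at hx'
    exact le_of_pow_le_pow_left₀ (by norm_num) hu0 hx'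
  have h4 : 4 ≤ u := (le_max_left _ _).trans hmu
  have hK : 8 * K ≤ u := (le_max_right _ _).trans hmu
  have hsq : √(x : ℝ) = u ^ 2 := by
    rw [← hu4, show u ^ 4 = (u ^ 2) ^ 2 by ring, Real.sqrt_sq (by positivity)]
  have hx1 : (1 : ℝ) < x := by
    rw [← hu4]; exact one_lt_pow₀ (by linarith) (by norm_num)
  have hlog : Real.log x ≤ 4 * u := by
    have := Real.log_le_rpow_div (x := x) (by positivity) (ε := 1 / 4) (by norm_num)
    rw [← hu] at this
    linarith
  have hlogpos : 0 < Real.log x := Real.log_pos hx1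
  have hlog1 : Real.log (x + 1) ≤ Real.log 2 + 4 * u := by
    have h1 : Real.log (x + 1) ≤ Real.log (2 * x) := Real.log_le_log (by linarith) (by linarith)
    rw [Real.log_mul (by norm_num) (by linarith)] at h1
    linarith
  refine le_trans ?_ (Chebyshev.pi_ge x)
  rw [le_div_iff₀ hlogpos, hsq]
  have l1 := Real.log_two_gt_d9
  have l2 := Real.log_two_lt_d9
  have h3 : K * u ^ 2 * Real.log x ≤ u ^ 4 / 2 := by
    have a1 : K * u ^ 2 * Real.log x ≤ (u / 8) * u ^ 2 * Real.log x := by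
      apply mul_le_mul_of_nonneg_right _ hlogpos.le
      apply mul_le_mul_of_nonneg_right (by linarith) (by positivity)
    have a2 : (u / 8) * u ^ 2 * Real.log x ≤ (u / 8) * u ^ 2 * (4 * u) :=
      mul_le_mul_of_nonneg_left hlog (by positivity)
    nlinarith
  have h5 : 64 * u ≤ u ^ 4 := by
    have : 4 ^ 3 ≤ u ^ 3 := pow_le_pow_left₀ (by norm_num) h4 3
    nlinarith
  rw [hu4] at h3 h5
  have h6 : (x : ℝ) * 0.69 ≤ x * Real.log 2 :=
    mul_le_mul_of_nonneg_left (by linarith) (by linarith)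
  linarith

open Classical in
/-- The primes `p` with `√x < p ≤ x` for which none of `1, …, y` is a primitive root. -/
noncomputable def badPrimes (x y : ℕ) : Finset ℕ :=
  {p ∈ range (x + 1) | p.Prime ∧ x < p ^ 2 ∧ ∀ n ∈ Icc 1 y, orderOf (n : ZMod p) ≠ p - 1}

/-- There are `O(√x)` bad primes when `y = ⌊x ^ (1 / 20)⌋`. -/
theorem card_badPrimes_sq_le : ∃ C : ℕ, 0 < C ∧ ∀ x y : ℕ, 2 ^ 122 * C ≤ x → y ^ 20 ≤ x →
    x < (y + 1) ^ 20 → #(badPrimes x y) ^ 2 ≤ 4 * (C * x) := by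
  obtain ⟨C, hC, hdiv⟩ := card_divisors_pow_le 2160
  refine ⟨C, hC, fun x y hx hy hxy => ?_⟩
  have hx0 : 0 < x := lt_of_lt_of_le (by positivity) hx
  have hy0 : 0 < y := by
    rcases Nat.eq_zero_or_pos y with rfl | h
    · exfalso
      have : x < 1 := by simpa using hxy
      omega
    · exact h
  set B := badPrimes x y with hB
  have hBm : ∀ p ∈ B, p ≤ x ∧ p.Prime ∧ x < p ^ 2 ∧ ∀ n ∈ Icc 1 y, orderOf (n : ZMod p) ≠ p - 1 := by
    intro p hp
    simp only [hB, badPrimes, mem_filter, mem_range] at hp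
    exact ⟨by omega, hp.2⟩
  obtain ⟨n₀, hn₀, hmax⟩ := Finset.exists_max_image (Icc 1 (x ^ 3)) (fun n => #n.divisors)
    ⟨1, mem_Icc.2 ⟨le_rfl, Nat.one_le_pow _ _ hx0⟩⟩
  generalize hD : #n₀.divisors = D at hmax
  -- The trivial character is a dummy value outside `B`.
  have hex : ∀ p, ∃ χ : MulChar (ZMod p) ℂ, p ∈ B → χ ≠ 1 ∧
      (y : ℝ) ≤ (D : ℝ) ^ 2 * ‖∑ n ∈ Icc 1 y, χ (n : ZMod p)‖ := by
    intro p
    by_cases hp : p ∈ B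
    · obtain ⟨hpx, hprime, hp2, hbad⟩ := hBm p hp
      have : Fact p.Prime := ⟨hprime⟩
      have hyp : y < p := by
        by_contra! h
        have : p ^ 2 ≤ y ^ 20 :=
          (Nat.pow_le_pow_left h 2).trans (Nat.pow_le_pow_right hy0 (by norm_num))
        omega
      obtain ⟨χ, h1, h2⟩ := exists_large_charSum p y hy0 hyp hbad
      refine ⟨χ, fun _ => ⟨h1, h2.trans ?_⟩⟩
      have hle : #(p - 1).divisors ≤ D := by
        refine hmax (p - 1) (mem_Icc.2 ⟨?_, ?_⟩)
        · have := hprime.two_le; omega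
        · have := Nat.le_self_pow (n := 3) (by norm_num) x
          omega
      exact mul_le_mul_of_nonneg_right
        (pow_le_pow_left₀ (Nat.cast_nonneg _) (Nat.cast_le.2 hle) 2) (norm_nonneg _)
    · exact ⟨1, fun h => absurd h hp⟩
  choose χ hχ using hex
  have hN : y ^ 60 ≤ x ^ 3 := by
    calc y ^ 60 = (y ^ 20) ^ 3 := by ring
      _ ≤ x ^ 3 := Nat.pow_le_pow_left hy 3
  have key := card_large_le B
    (fun p => ((χ p : MulChar (ZMod p) ℂ).toMonoidHom).comp (Nat.castRingHom (ZMod p)).toMonoidHom)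
    y 60 D ((x : ℝ) ^ 2) (sq_nonneg _)
    (by
      intro p hp n
      exact DirichletCharacter.norm_le_one (χ p) _)
    (by
      intro p hp q hq hpq
      obtain ⟨hpx, hprime, -⟩ := hBm p hp
      obtain ⟨hqx, hqrime, -⟩ := hBm q hq
      have : Fact p.Prime := ⟨hprime⟩
      have : Fact q.Prime := ⟨hqrime⟩
      refine (norm_sum_char_mul_conj_le hpq (χ p) (χ q) (hχ p hp).1 (y ^ 60)).trans ?_
      rw [sq]
      exact_mod_cast Nat.mul_le_mul hpx hqx)
    (by
      intro n hn
      rw [mem_Icc] at hn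
      exact hmax n (mem_Icc.2 ⟨hn.1, hn.2.trans hN⟩))
    hy0 (fun p hp => (hχ p hp).2)
  have hDk : D ^ 2160 ≤ C * x ^ 3 := by
    rw [mem_Icc] at hn₀
    rw [← hD]
    exact (hdiv n₀ (by omega)).trans (Nat.mul_le_mul_left _ hn₀.2)
  -- Here `2160 = 6 * 360`, so that the cube of `(D ^ 360) ^ 2` is controlled by `x ^ 3`.
  have hA : (D ^ 360) ^ 2 ≤ C * x := by
    refine (Nat.pow_le_pow_iff_left (n := 3) (by norm_num)).1 ?_
    calc ((D ^ 360) ^ 2) ^ 3 = D ^ 2160 := by rw [← pow_mul, ← pow_mul]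
      _ ≤ C * x ^ 3 := hDk
      _ ≤ C ^ 3 * x ^ 3 := Nat.mul_le_mul_right _ (Nat.le_self_pow (by norm_num) C)
      _ = (C * x) ^ 3 := by ring
  clear hDk
  have hN' : x ^ 3 ≤ 2 ^ 60 * y ^ 60 := by
    calc x ^ 3 ≤ ((y + 1) ^ 20) ^ 3 := Nat.pow_le_pow_left hxy.le 3
      _ ≤ ((2 * y) ^ 20) ^ 3 := Nat.pow_le_pow_left (Nat.pow_le_pow_left (by omega) 20) 3
      _ = 2 ^ 60 * y ^ 60 := by ring
  have key' : #B * y ^ 60 ≤ D ^ 360 * (y ^ 60 + x ^ 2 * #B) := by exact_mod_cast key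
  clear key
  generalize D ^ 360 = A at hA key'
  generalize y ^ 60 = N at hN' key'
  have hAx : 2 ^ 61 * A ≤ x := by
    refine (Nat.pow_le_pow_iff_left (n := 2) (by norm_num)).1 ?_
    calc (2 ^ 61 * A) ^ 2 = 2 ^ 122 * A ^ 2 := by ring
      _ ≤ 2 ^ 122 * (C * x) := Nat.mul_le_mul_left _ hA
      _ = (2 ^ 122 * C) * x := by ring
      _ ≤ x * x := Nat.mul_le_mul_right _ hx
      _ = x ^ 2 := by ring
  -- The off-diagonal term `A * x ^ 2 * #B` is at most half of `N * #B`.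
  have h1 : 2 * (A * x ^ 2) ≤ N := by
    have : 2 ^ 60 * (2 * (A * x ^ 2)) ≤ 2 ^ 60 * N := by
      calc 2 ^ 60 * (2 * (A * x ^ 2)) = (2 ^ 61 * A) * x ^ 2 := by ring
        _ ≤ x * x ^ 2 := Nat.mul_le_mul_right _ hAx
        _ = x ^ 3 := by ring
        _ ≤ _ := hN'
    exact Nat.le_of_mul_le_mul_left this (Nat.two_pow_pos 60)
  have hN0 : 0 < N := by
    rcases Nat.eq_zero_or_pos N with rfl | h
    · have : 0 < x ^ 3 := pow_pos hx0 3
      omega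
    · exact h
  have h2 : #B ≤ 2 * A := by
    refine Nat.le_of_mul_le_mul_right (c := N) ?_ hN0
    clear hx hAx hA
    nlinarith [Nat.mul_le_mul_right (#B) h1]
  calc #B ^ 2 ≤ (2 * A) ^ 2 := Nat.pow_le_pow_left h2 2
    _ = 4 * A ^ 2 := by ring
    _ ≤ _ := Nat.mul_le_mul_left _ hA

theorem exists_pow_twenty_le (x : ℕ) : ∃ y : ℕ, y ^ 20 ≤ x ∧ x < (y + 1) ^ 20 := by
  refine ⟨Nat.findGreatest (fun y => y ^ 20 ≤ x) x, ?_, ?_⟩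
  · exact Nat.findGreatest_spec (P := fun y => y ^ 20 ≤ x) (Nat.zero_le x) (by simp)
  · by_contra! h
    have h1 := Nat.le_findGreatest (P := fun y => y ^ 20 ≤ x)
      ((Nat.le_self_pow (by norm_num) _).trans h) h
    omega

theorem leastPrimRoot_le_rpow {δ : ℝ} (hδ : 1 / 10 ≤ δ) {p x y n : ℕ} (hy : y ^ 20 ≤ x)
    (hx : x < p ^ 2) (hn : n ∈ Icc 1 y) (hord : orderOf (n : ZMod p) = p - 1) :
    (leastPrimRoot p : ℝ) ≤ (p : ℝ) ^ δ := by
  rw [mem_Icc] at hn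
  have h0 : leastPrimRoot p ≤ n := Nat.sInf_le
    (show n ∈ {n : ℕ | 0 < n ∧ orderOf ((n : ZMod p)) = p - 1} from ⟨hn.1, hord⟩)
  have h1 : leastPrimRoot p ≤ y := h0.trans hn.2
  have h2 : y ^ 10 < p := by
    refine (Nat.pow_lt_pow_iff_left (n := 2) (by norm_num)).1 ?_
    calc (y ^ 10) ^ 2 = y ^ 20 := by ring
      _ ≤ x := hy
      _ < p ^ 2 := hx
  have hp1 : (1 : ℝ) ≤ p := by exact_mod_cast (show 1 ≤ p by omega)
  calc (leastPrimRoot p : ℝ) ≤ y := by exact_mod_cast h1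
    _ = ((y : ℝ) ^ 10) ^ (1 / 10 : ℝ) := by
        rw [← Real.rpow_natCast, ← Real.rpow_mul (by positivity)]; norm_num
    _ ≤ (p : ℝ) ^ (1 / 10 : ℝ) := by
        refine Real.rpow_le_rpow (by positivity) ?_ (by norm_num)
        exact_mod_cast h2.le
    _ ≤ (p : ℝ) ^ δ := Real.rpow_le_rpow_of_exponent_le hp1 hδ

theorem stmt2 (ε : ℝ) (hε : 0 < ε) :
    ∃ c : ℝ, 0 < c ∧ ∃ C : ℝ, 0 < C ∧ ∃ x₀ : ℕ, ∀ x : ℕ, x₀ ≤ x →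
      c * ({p : ℕ | p ≤ x ∧ p.Prime}.ncard : ℝ) ≤
        ({p : ℕ | p ≤ x ∧ p.Prime ∧
            (leastPrimRoot p : ℝ) ≤
              C * (p : ℝ) ^ (1 / (4 * Real.sqrt (Real.exp 1)) + ε)}.ncard : ℝ) := by
  obtain ⟨C, hC, hbad⟩ := card_badPrimes_sq_le
  obtain ⟨x₁, hpi⟩ := exists_sqrt_le_primeCounting (2 * (2 * √(C : ℝ) + 2))
  refine ⟨1 / 2, by norm_num, 1, one_pos, max x₁ (2 ^ 122 * C), fun x hx => ?_⟩
  have hx1 : x₁ ≤ x := (le_max_left _ _).trans hx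
  have hx2 : 2 ^ 122 * C ≤ x := (le_max_right _ _).trans hx
  have hx0 : 0 < x := lt_of_lt_of_le (by positivity) hx2
  obtain ⟨y, hy, hxy⟩ := exists_pow_twenty_le x
  have hδ : 1 / 10 ≤ 1 / (4 * √(Real.exp 1)) + ε := by
    have h1 : √(Real.exp 1) ≤ 2 := by
      rw [Real.sqrt_le_left (by norm_num)]
      have := Real.exp_one_lt_d9
      linarith
    have h2 : 0 < √(Real.exp 1) := Real.sqrt_pos.2 (Real.exp_pos 1)
    have h3 : 1 / 10 ≤ 1 / (4 * √(Real.exp 1)) :=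
      one_div_le_one_div_of_le (by positivity) (by linarith)
    linarith
  set P : Set ℕ := {p : ℕ | p ≤ x ∧ p.Prime} with hP
  set G : Set ℕ := {p : ℕ | p ≤ x ∧ p.Prime ∧ (leastPrimRoot p : ℝ) ≤
              1 * (p : ℝ) ^ (1 / (4 * Real.sqrt (Real.exp 1)) + ε)} with hG
  have hGfin : G.Finite := (Set.finite_Iic x).subset fun p hp => hp.1
  have hPcard : P.ncard = x.primeCounting := by
    rw [Nat.primeCounting, Nat.primeCounting', Nat.count_eq_card_filter_range,
      ← Set.ncard_coe_finset]
    congr 1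
    ext p
    simp [hP]
  have hsub : P ⊆ G ∪ ((badPrimes x y ∪ range (Nat.sqrt x + 1) : Finset ℕ) : Set ℕ) := by
    rintro p ⟨hpx, hp⟩
    by_cases h2 : x < p ^ 2
    · by_cases hb : ∀ n ∈ Icc 1 y, orderOf (n : ZMod p) ≠ p - 1
      · right
        simp only [coe_union, Set.mem_union, mem_coe]
        left
        simp only [badPrimes, mem_filter, mem_range]
        exact ⟨by omega, hp, h2, hb⟩
      · left
        push Not at hb
        obtain ⟨n, hn, hord⟩ := hb
        exact ⟨hpx, hp, by rw [one_mul]; exact leastPrimRoot_le_rpow hδ hy h2 hn hord⟩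
    · right
      simp only [coe_union, Set.mem_union, mem_coe]
      right
      rw [mem_range, Nat.lt_succ_iff, Nat.le_sqrt']
      omega
  have hcard : x.primeCounting ≤ G.ncard + (#(badPrimes x y) + (Nat.sqrt x + 1)) := by
    rw [← hPcard]
    refine (Set.ncard_le_ncard hsub (hGfin.union (Finset.finite_toSet _))).trans ?_
    refine (Set.ncard_union_le _ _).trans ?_
    rw [Set.ncard_coe_finset]
    refine Nat.add_le_add_left ((Finset.card_union_le _ _).trans ?_) _
    rw [card_range]
  have hcardR : (x.primeCounting : ℝ) ≤ G.ncard + (#(badPrimes x y) + (Nat.sqrt x + 1)) := by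
    exact_mod_cast hcard
  have hb : (#(badPrimes x y) : ℝ) ≤ 2 * √(C : ℝ) * √(x : ℝ) := by
    have h := hbad x y hx2 hy hxy
    have hR : (#(badPrimes x y) : ℝ) ^ 2 ≤ 4 * (C * x) := by exact_mod_cast h
    refine le_of_pow_le_pow_left₀ (n := 2) (by norm_num) (by positivity) (hR.trans_eq ?_)
    rw [mul_pow, mul_pow, Real.sq_sqrt (by positivity), Real.sq_sqrt (by positivity)]
    ring
  have hs : (Nat.sqrt x : ℝ) ≤ √(x : ℝ) := Real.nat_sqrt_le_real_sqrt
  have hs1 : 1 ≤ √(x : ℝ) := Real.one_le_sqrt.2 (by exact_mod_cast hx0)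
  have hpix := hpi x hx1
  rw [hPcard]
  linarith
end

section
/- Let ρ be the Dickman–de Bruijn function and for an integer d ≥ 2 let u(d) be the unique positive real with ρ(u(d)) = 1/d. There exist a constant C > 0 and p₀ such that for every prime p ≥ p₀ and every divisor d of p−1 with d ≥ 2, the least d-th power non-residue satisfies 𝐠_p(d) ≤ C·p^(1/u(d)). -/
/-!
The bound is Vinogradov's argument with a sharp, uniform lower bound for smooth numbers.
If `g` is the least non-residue and `Y = g - 1`, then the set `A` of `d`-th power residues is
closed under multiplication and contains `1, …, Y`. It contains `(p - 1) / d` of the integers up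
to `p - 1`. On the other hand its counting function satisfies

  `#(A ∩ [1, t]) ≥ t ρ(log t / l)` for `t ≥ Y`, with `l = log Y - K` and `K` an absolute constant

(`countIn_lower`). With `t = p - 1` this gives `ρ(log (p - 1) / l) ≤ 1 / d = ρ(u(d))`, hence
`l ≤ log p / u(d)` since `ρ` is strictly decreasing on `[1, ∞)`, and so `g ≪ p ^ (1 / u(d))`.

The lower bound is proved by induction on `t` through the Chebyshev identity
`∑_{n ≤ t, n ∈ A} log n ≥ ∑_{m ≤ Y} Λ(m) #(A ∩ [1, t / m])`. The induction hypothesis is the weaker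
`#(A ∩ [1, t]) ≥ (t - 1) ρ(log t / l)`, which is trivial for `t ≤ Y`. For `t ≥ Y` the sum is then at
least `t ∑_{m ≤ Y} Λ(m) (1/m - 1/t) ρ((log t - log m) / l)`. By Mertens and Chebyshev, the weights
`Λ(m) (1/m - 1/t)` on `(k, Y]` have total mass at least `log (Y / k) - K`, so they are placed
further to the right than Lebesgue measure on `[0, l]`. As `ρ` decreases, the sum is at least
`∫_0^l ρ((log t - s) / l) ds = log t · ρ(log t / l)`. All errors are thus absorbed in the shift
by `K`, which costs only the constant factor in the theorem and is uniform in `d`.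
-/

/-- The least positive integer whose residue class mod `p` is not a `d`-th power
residue, i.e. is not of the form `x ^ d` for a unit `x` of `ZMod p`. -/
noncomputable def leastDPowNonRes (p d : ℕ) : ℕ :=
  sInf {n : ℕ | 0 < n ∧ ¬ ∃ x : (ZMod p)ˣ, ((x : ZMod p)) ^ d = (n : ZMod p)}

/-! ### Chebyshev and Mertens estimates -/

open Finset ArithmeticFunction in
/-- Legendre's formula for `n!`, in logarithmic form. -/
lemma sum_log_eq_sum_vonMangoldt (n : ℕ) :
    ∑ k ∈ Ioc 0 n, Real.log k = ∑ m ∈ Ioc 0 n, vonMangoldt m * ((n / m : ℕ) : ℝ) := by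
  rw [← sum_Ioc_mul_zeta_eq_sum, vonMangoldt_mul_zeta]
  simp [log_apply]

open Finset ArithmeticFunction in
lemma sum_vonMangoldt_le (n : ℕ) :
    ∑ m ∈ Ioc 0 n, vonMangoldt m ≤ (Real.log 4 + 4) * n := by
  simpa [Chebyshev.psi] using Chebyshev.psi_le_const_mul_self (Nat.cast_nonneg (α := ℝ) n)

open Finset ArithmeticFunction in
/-- Lower half of Mertens' first theorem. -/
lemma mertens_lower (n : ℕ) (hn : 1 ≤ n) :
    Real.log n - 1 ≤ ∑ m ∈ Ioc 0 n, vonMangoldt m / m := by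
  have hn0 : (0 : ℝ) < n := by exact_mod_cast hn
  have h1 : (n : ℝ) * Real.log n - n ≤ ∑ k ∈ Ioc 0 n, Real.log k := by
    have h := Real.pow_div_factorial_le_exp (n : ℝ) hn0.le n
    have hf : (0 : ℝ) < (n.factorial : ℝ) := by exact_mod_cast n.factorial_pos
    have h2 := Real.log_le_log (by positivity) h
    rw [Real.log_exp, Real.log_div (by positivity) hf.ne', Real.log_pow] at h2
    have h3 : ∑ k ∈ Ioc 0 n, Real.log k = Real.log (n.factorial : ℝ) := by
      rw [← Real.log_prod (fun k hk => by
        have := (mem_Ioc.mp hk).1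
        positivity), ← Nat.cast_prod]
      congr 2
      rw [← Finset.prod_Ico_id_eq_factorial]
      rfl
    linarith
  rw [sum_log_eq_sum_vonMangoldt] at h1
  have h2 : ∑ m ∈ Ioc 0 n, vonMangoldt m * ((n / m : ℕ) : ℝ) ≤
      n * ∑ m ∈ Ioc 0 n, vonMangoldt m / m := by
    rw [mul_sum]
    refine sum_le_sum fun m _ => ?_
    have := mul_le_mul_of_nonneg_left (Nat.cast_div_le (α := ℝ) (m := n) (n := m))
      (vonMangoldt_nonneg (n := m))
    calc _ ≤ _ := this
      _ = _ := by ring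
  have h3 : (n : ℝ) * (Real.log n - 1) ≤ n * ∑ m ∈ Ioc 0 n, vonMangoldt m / m := by linarith
  exact le_of_mul_le_mul_left h3 hn0

open Finset ArithmeticFunction in
/-- Upper half of Mertens' first theorem. -/
lemma mertens_upper (n : ℕ) (hn : 1 ≤ n) :
    ∑ m ∈ Ioc 0 n, vonMangoldt m / m ≤ Real.log n + (Real.log 4 + 4) := by
  have hn0 : (0 : ℝ) < n := by exact_mod_cast hn
  have h1 : ∑ k ∈ Ioc 0 n, Real.log k ≤ n * Real.log n := by
    have : ∑ k ∈ Ioc 0 n, Real.log k ≤ ∑ k ∈ Ioc 0 n, Real.log n := by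
      refine sum_le_sum fun k hk => ?_
      obtain ⟨ha, hb⟩ := mem_Ioc.mp hk
      exact Real.log_le_log (by exact_mod_cast ha) (by exact_mod_cast hb)
    simpa using this
  rw [sum_log_eq_sum_vonMangoldt] at h1
  have h2 : n * ∑ m ∈ Ioc 0 n, vonMangoldt m / m - ∑ m ∈ Ioc 0 n, vonMangoldt m ≤
      ∑ m ∈ Ioc 0 n, vonMangoldt m * ((n / m : ℕ) : ℝ) := by
    rw [mul_sum, ← sum_sub_distrib]
    refine sum_le_sum fun m _ => ?_
    have h : (n : ℝ) / m - 1 ≤ ((n / m : ℕ) : ℝ) := by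
      have := Nat.sub_one_lt_floor ((n : ℝ) / m)
      rw [Nat.floor_div_natCast, Nat.floor_natCast] at this
      exact this.le
    have := mul_le_mul_of_nonneg_left h (vonMangoldt_nonneg (n := m))
    calc _ = vonMangoldt m * ((n : ℝ) / m - 1) := by ring
      _ ≤ _ := this
  have h3 := sum_vonMangoldt_le n
  have : (n : ℝ) * ∑ m ∈ Ioc 0 n, vonMangoldt m / m ≤
      n * (Real.log n + (Real.log 4 + 4)) := by linarith
  exact le_of_mul_le_mul_left this hn0

open Finset ArithmeticFunction in
/-- The tails of the weights `Λ(m) (1/m - 1/x)` on `m ≤ Y` dominate those of Lebesgue measure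
on `[0, l]` in the variable `log m`, once `l` is a constant below `log Y`. -/
lemma weight_tail (Y k : ℕ) (hk : 1 ≤ k) (hkY : k ≤ Y) (x : ℝ) (hx : (Y : ℝ) ≤ x) (l : ℝ)
    (hl : l ≤ Real.log Y - 1 - 2 * (Real.log 4 + 4)) :
    l - Real.log k ≤ ∑ m ∈ Ioc k Y, vonMangoldt m * (1 / m - 1 / x) := by
  have h1 := mertens_lower Y (hk.trans hkY)
  have h2 := mertens_upper k hk
  have hY : (0 : ℝ) < Y := by exact_mod_cast hk.trans hkY
  have hx0 : 0 < x := hY.trans_le hx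
  have h3 : ∑ m ∈ Ioc k Y, vonMangoldt m / x ≤ Real.log 4 + 4 := by
    rw [← sum_div, div_le_iff₀ hx0]
    have hc : 0 ≤ Real.log 4 + 4 := by have := Real.log_nonneg (x := 4) (by norm_num); linarith
    calc ∑ m ∈ Ioc k Y, vonMangoldt m ≤ ∑ m ∈ Ioc 0 Y, vonMangoldt m :=
          sum_le_sum_of_subset_of_nonneg (Ioc_subset_Ioc_left (Nat.zero_le _))
            fun _ _ _ => vonMangoldt_nonneg
      _ ≤ (Real.log 4 + 4) * Y := sum_vonMangoldt_le Y
      _ ≤ _ := by gcongr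
  have h4 : ∑ m ∈ Ioc 0 k, vonMangoldt m / (m : ℝ) + ∑ m ∈ Ioc k Y, vonMangoldt m / (m : ℝ) =
      ∑ m ∈ Ioc 0 Y, vonMangoldt m / (m : ℝ) := by
    exact Finset.sum_Ioc_consecutive _ (Nat.zero_le _) hkY
  have h5 : ∑ m ∈ Ioc k Y, vonMangoldt m * (1 / (m : ℝ) - 1 / x) =
      ∑ m ∈ Ioc k Y, vonMangoldt m / (m : ℝ) - ∑ m ∈ Ioc k Y, vonMangoldt m / x := by
    rw [← sum_sub_distrib]
    exact sum_congr rfl fun m _ => by ring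
  linarith

/-! ### Rearrangement of mass -/

open Finset in
/-- Comparison of a weighted sum of a monotone function with an integral, by moving mass to the
left: the part of `[0, l]` assigned to the index `k` lies to the left of `log k`. -/
lemma integral_le_weighted_sum (f : ℝ → ℝ) (hf : Continuous f) (hmono : Monotone f)
    (hf0 : ∀ s, 0 ≤ f s) (Y : ℕ) (hY : 1 ≤ Y) (w : ℕ → ℝ) (hw : ∀ m ∈ Ioc 1 Y, 0 ≤ w m) (l : ℝ)
    (hT : ∀ k, 1 ≤ k → k ≤ Y → l - Real.log k ≤ ∑ m ∈ Ioc k Y, w m) :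
    ∫ s in (0 : ℝ)..l, f s ≤ ∑ m ∈ Ioc 1 Y, w m * f (Real.log m) := by
  have hint : ∀ a b, IntervalIntegrable f MeasureTheory.volume a b :=
    fun a b => hf.intervalIntegrable a b
  have key : ∀ k, k ≤ Y → 1 ≤ k → ∫ s in (l - ∑ m ∈ Ioc k Y, w m)..l, f s ≤
      ∑ m ∈ Ioc k Y, w m * f (Real.log m) := by
    intro k hk
    induction hk using Nat.decreasingInduction with
    | self => simp
    | of_succ k hk ih =>
      intro hk1
      have hs : ∀ g : ℕ → ℝ, ∑ m ∈ Ioc k Y, g m = g (k + 1) + ∑ m ∈ Ioc (k + 1) Y, g m := by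
        intro g
        rw [← Finset.sum_Ioc_consecutive g (Nat.le_succ k) hk]
        simp
      have hT' := hT (k + 1) (by omega) hk
      have hwk : 0 ≤ w (k + 1) := hw _ (by simp; omega)
      rw [hs, hs]
      set T := ∑ m ∈ Ioc (k + 1) Y, w m
      rw [← intervalIntegral.integral_add_adjacent_intervals
        (hint (l - (w (k + 1) + T)) (l - T)) (hint (l - T) l)]
      have h1 : ∫ s in (l - (w (k + 1) + T))..(l - T), f s ≤
          ∫ s in (l - (w (k + 1) + T))..(l - T), f (Real.log ((k + 1 : ℕ) : ℝ)) := by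
        refine intervalIntegral.integral_mono_on (by linarith) (hint _ _) (by simp) ?_
        intro s hs
        exact hmono (by linarith [hs.2])
      rw [intervalIntegral.integral_const, smul_eq_mul] at h1
      have h2 := ih (by omega)
      have h3 : l - T - (l - (w (k + 1) + T)) = w (k + 1) := by ring
      rw [h3] at h1
      linarith
  refine le_trans ?_ (key 1 hY le_rfl)
  have h1 := hT 1 le_rfl hY
  simp only [Nat.cast_one, Real.log_one, sub_zero] at h1
  rw [← intervalIntegral.integral_add_adjacent_intervals
    (hint (l - ∑ m ∈ Ioc 1 Y, w m) 0) (hint 0 l)]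
  have := intervalIntegral.integral_nonneg (μ := MeasureTheory.volume) (f := f)
    (a := l - ∑ m ∈ Ioc 1 Y, w m) (b := 0) (by linarith) (fun s _ => hf0 s)
  linarith

/-! ### The Dickman function -/

/-- The Dickman function satisfies `v ρ(v) = ∫_{v-1}^v ρ`. Here and below `R` is its extension
by `1` to the negative half-line, which is continuous on all of `ℝ`. -/
lemma dickman_integral (R : ℝ → ℝ) (hc : Continuous R) (h1 : ∀ v ≤ 1, R v = 1)
    (h' : ∀ v, 1 < v → HasDerivAt R (-(R (v - 1)) / v) v) (v : ℝ) (hv : 1 ≤ v) :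
    ∫ s in (v - 1)..v, R s = v * R v := by
  have hint : ∀ a b, IntervalIntegrable R MeasureTheory.volume a b :=
    fun a b => hc.intervalIntegrable a b
  let I : ℝ → ℝ := fun v => ∫ s in (0 : ℝ)..v, R s
  have hI : ∀ v, HasDerivAt I (R v) v := fun v =>
    intervalIntegral.integral_hasDerivAt_right (hint _ _)
      hc.stronglyMeasurable.stronglyMeasurableAtFilter hc.continuousAt
  have hIs : ∀ v, ∫ s in (v - 1)..v, R s = I v - I (v - 1) := fun v =>
    (intervalIntegral.integral_interval_sub_left (hint _ _) (hint _ _)).symm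
  have hIc : Continuous I := continuous_iff_continuousAt.mpr fun v => (hI v).continuousAt
  let H : ℝ → ℝ := fun v => I v - I (v - 1) - v * R v
  have hHv : H v = H 1 := by
    have hd : ∀ x, 1 < x → HasDerivAt H 0 x := by
      intro x hx
      have e1 : HasDerivAt (fun v => I (v - 1)) (R (x - 1)) x := by
        simpa using (hI (x - 1)).comp_sub_const x 1
      have e2 := (hasDerivAt_id x).mul (h' x hx)
      refine (((hI x).sub e1).sub e2).congr_deriv ?_
      have : x ≠ 0 := by linarith
      simp only [id]
      field_simp
      ring
    rcases hv.eq_or_lt with rfl | hv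
    · rfl
    have hHc : Continuous H := by fun_prop
    obtain ⟨c, hc1, hc2⟩ := exists_hasDerivAt_eq_slope H (fun _ => 0) hv hHc.continuousOn
      fun x hx => hd x hx.1
    have hv0 : v - 1 ≠ 0 := by linarith
    field_simp at hc2
    linarith
  have hH1 : H 1 = 0 := by
    have : ∫ s in (0 : ℝ)..1, R s = 1 := by
      rw [intervalIntegral.integral_congr (g := fun _ => (1 : ℝ))]
      · simp
      · intro s hs
        rw [Set.uIcc_of_le zero_le_one] at hs
        exact h1 s hs.2
    simp only [H, I, sub_self, this, h1 1 le_rfl, intervalIntegral.integral_same]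
    norm_num
  rw [hH1] at hHv
  rw [hIs]
  simp only [H] at hHv
  linarith

/-- At the first `a` with `ρ(a) ≤ 0`, the integral `a ρ(a) = ∫_{a-1}^a ρ` would be positive. -/
lemma dickman_pos (R : ℝ → ℝ) (hc : Continuous R) (h1 : ∀ v ≤ 1, R v = 1)
    (h' : ∀ v, 1 < v → HasDerivAt R (-(R (v - 1)) / v) v) (v : ℝ) : 0 < R v := by
  by_contra! hv
  let S : Set ℝ := {v | R v ≤ 0}
  have hS : IsClosed S := isClosed_le hc continuous_const
  have hS1 : ∀ s ∈ S, 1 < s := by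
    intro s hs
    by_contra! h
    have : R s ≤ 0 := hs
    rw [h1 s h] at this
    linarith
  have hb : BddBelow S := ⟨1, fun s hs => (hS1 s hs).le⟩
  have hm : sInf S ∈ S := hS.csInf_mem ⟨v, hv⟩ hb
  set a := sInf S
  have ha := hS1 a hm
  have hint := dickman_integral R hc h1 h' a ha.le
  have hpos : 0 < ∫ s in (a - 1)..a, R s := by
    refine intervalIntegral.intervalIntegral_pos_of_pos_on (hc.intervalIntegrable _ _) ?_
      (by linarith)
    intro s hs
    by_contra! h
    have : a ≤ s := csInf_le hb h
    linarith [hs.2]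
  have : R a ≤ 0 := hm
  nlinarith

lemma dickman_strictAntiOn (R : ℝ → ℝ) (hc : Continuous R) (h1 : ∀ v ≤ 1, R v = 1)
    (h' : ∀ v, 1 < v → HasDerivAt R (-(R (v - 1)) / v) v) : StrictAntiOn R (Set.Ici 1) := by
  refine strictAntiOn_of_deriv_neg (convex_Ici 1) hc.continuousOn ?_
  intro x hx
  rw [interior_Ici] at hx
  have hx : 1 < x := hx
  rw [(h' x hx).deriv]
  have := dickman_pos R hc h1 h' (x - 1)
  have h0 : 0 < x := by linarith
  rw [neg_div]
  have := div_pos this h0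
  linarith

lemma dickman_antitone (R : ℝ → ℝ) (hc : Continuous R) (h1 : ∀ v ≤ 1, R v = 1)
    (h' : ∀ v, 1 < v → HasDerivAt R (-(R (v - 1)) / v) v) : Antitone R := by
  have hs := (dickman_strictAntiOn R hc h1 h').antitoneOn
  intro a b hab
  rcases le_total b 1 with hb | hb
  · rw [h1 a (hab.trans hb), h1 b hb]
  · rcases le_total a 1 with ha | ha
    · rw [h1 a ha, ← h1 1 le_rfl]
      exact hs Set.self_mem_Ici hb hb
    · exact hs ha hb hab

/-! ### Counting in multiplicatively closed sets -/

/-- The number of positive integers up to `n` that lie in `A`. -/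
noncomputable def countIn (A : Set ℕ) (n : ℕ) : ℕ := by
  classical exact ((Finset.Ioc 0 n).filter (· ∈ A)).card

open Finset ArithmeticFunction in
/-- Double counting of the pairs `(m, k)` with `m ≤ Y` and `m k ≤ n`, `k ∈ A`, weighted by
`Λ(m)`. -/
lemma sum_vonMangoldt_countIn_le (A : Set ℕ) (hmul : ∀ a ∈ A, ∀ b ∈ A, a * b ∈ A) (Y : ℕ)
    (hY : ∀ m, 1 ≤ m → m ≤ Y → m ∈ A) (n : ℕ) :
    ∑ m ∈ Ioc 1 Y, vonMangoldt m * (countIn A (n / m) : ℝ) ≤ countIn A n * Real.log n := by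
  classical
  let F := (Ioc 0 n).filter (· ∈ A)
  have hcard : ∀ m ∈ Ioc 1 Y, countIn A (n / m) ≤ (F.filter (m ∣ ·)).card := by
    intro m hm
    obtain ⟨hm1, hm2⟩ := mem_Ioc.mp hm
    unfold countIn
    refine card_le_card_of_injOn (fun k => m * k) ?_ ?_
    · intro k hk
      simp only [coe_filter, mem_Ioc, Set.mem_ofPred_eq, F, mem_filter] at hk ⊢
      refine ⟨⟨⟨Nat.mul_pos (by omega) hk.1.1, ?_⟩, hmul _ (hY m hm1.le hm2) _ hk.2⟩,
        dvd_mul_right _ _⟩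
      calc m * k ≤ m * (n / m) := Nat.mul_le_mul_left _ hk.1.2
        _ ≤ n := Nat.mul_div_le _ _
    · intro a _ b _ hab
      exact Nat.eq_of_mul_eq_mul_left (by omega) hab
  calc ∑ m ∈ Ioc 1 Y, vonMangoldt m * (countIn A (n / m) : ℝ)
      ≤ ∑ m ∈ Ioc 1 Y, vonMangoldt m * ((F.filter (m ∣ ·)).card : ℝ) := by
        refine sum_le_sum fun m hm => mul_le_mul_of_nonneg_left ?_ vonMangoldt_nonneg
        exact_mod_cast hcard m hm
    _ = ∑ m ∈ Ioc 1 Y, ∑ k ∈ F, if m ∣ k then vonMangoldt m else 0 := by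
        refine sum_congr rfl fun m _ => ?_
        rw [← sum_filter, sum_const, nsmul_eq_mul, mul_comm]
    _ = ∑ k ∈ F, ∑ m ∈ Ioc 1 Y, if m ∣ k then vonMangoldt m else 0 := sum_comm
    _ ≤ ∑ k ∈ F, Real.log n := by
        refine sum_le_sum fun k hk => ?_
        simp only [F, mem_filter, mem_Ioc] at hk
        calc (∑ m ∈ Ioc 1 Y, if m ∣ k then vonMangoldt m else 0)
            = ∑ m ∈ (Ioc 1 Y).filter (· ∣ k), vonMangoldt m := (sum_filter _ _).symm
          _ ≤ ∑ m ∈ k.divisors, vonMangoldt m := by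
            refine sum_le_sum_of_subset_of_nonneg ?_ fun _ _ _ => vonMangoldt_nonneg
            intro m hm
            rw [mem_filter] at hm
            exact Nat.mem_divisors.mpr ⟨hm.2, by omega⟩
          _ = Real.log k := vonMangoldt_sum
          _ ≤ Real.log n := Real.log_le_log (by exact_mod_cast hk.1.1) (by exact_mod_cast hk.1.2)
    _ = countIn A n * Real.log n := by
        rw [sum_const, nsmul_eq_mul]
        rfl

open Finset ArithmeticFunction in
/-- If a multiplicatively closed set contains `1, …, Y`, its counting function is at least
`t ρ(log t / l)` for `t ≥ Y`, where `l` is a constant below `log Y`. The first conclusion is the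
weaker bound, valid for all `t ≥ 1`, on which the induction runs: the loss of `1` makes it
trivial for `t ≤ Y`, and this loss is recovered for `t ≥ Y`. -/
lemma countIn_lower (R : ℝ → ℝ) (hc : Continuous R) (h1 : ∀ v ≤ 1, R v = 1)
    (h' : ∀ v, 1 < v → HasDerivAt R (-(R (v - 1)) / v) v)
    (A : Set ℕ) (hmul : ∀ a ∈ A, ∀ b ∈ A, a * b ∈ A) (Y : ℕ)
    (hY : ∀ m, 1 ≤ m → m ≤ Y → m ∈ A) (hY1 : 1 ≤ Y) (l : ℝ) (hl0 : 0 < l)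
    (hl : l ≤ Real.log Y - 1 - 2 * (Real.log 4 + 4)) (N : ℕ) :
    ∀ t : ℝ, 1 ≤ t → t < N →
      (t - 1) * R (Real.log t / l) ≤ countIn A ⌊t⌋₊ ∧
      ((Y : ℝ) ≤ t → t * R (Real.log t / l) ≤ countIn A ⌊t⌋₊) := by
  have hpos := dickman_pos R hc h1 h'
  have hanti := dickman_antitone R hc h1 h'
  have hlog4 : 0 ≤ Real.log 4 := Real.log_nonneg (by norm_num)
  induction N using Nat.strong_induction_on with
  | _ N ih =>
  intro t ht htN
  have ht0 : 0 < t := by linarith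
  have main : (Y : ℝ) ≤ t → t * R (Real.log t / l) ≤ countIn A ⌊t⌋₊ := by
    intro hYt
    have hYpos : (0 : ℝ) < Y := by exact_mod_cast hY1
    have hX : l < Real.log t := by
      have := Real.log_le_log hYpos hYt
      linarith
    have hXpos : 0 < Real.log t := hl0.trans hX
    have hstep : ∀ m ∈ Ioc 1 Y, vonMangoldt m * (1 / m - 1 / t) * R ((Real.log t - Real.log m) / l)
        ≤ vonMangoldt m * (countIn A (⌊t⌋₊ / m) : ℝ) / t := by
      intro m hm
      obtain ⟨hm1, hm2⟩ := mem_Ioc.mp hm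
      have hm0 : (0 : ℝ) < m := by exact_mod_cast (by omega : 0 < m)
      have hm2' : (2 : ℝ) ≤ m := by exact_mod_cast hm1
      have hmY : (m : ℝ) ≤ Y := by exact_mod_cast hm2
      have hN : 2 ≤ N := by
        have : (1 : ℝ) < N := by linarith
        have : 1 < N := by exact_mod_cast this
        omega
      have h := (ih (N - 1) (by omega) (t / m) (by rw [one_le_div hm0]; linarith) (by
        rw [Nat.cast_sub (by omega), Nat.cast_one]
        have hN2 : (2 : ℝ) ≤ N := by exact_mod_cast hN
        calc t / m ≤ t / 2 := by gcongr
          _ < N / 2 := by gcongr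
          _ ≤ N - 1 := by linarith)).1
      rw [Nat.floor_div_natCast, Real.log_div ht0.ne' hm0.ne'] at h
      have h2 := mul_le_mul_of_nonneg_left h (vonMangoldt_nonneg (n := m))
      rw [le_div_iff₀ ht0]
      calc _ = vonMangoldt m * ((t / m - 1) * R ((Real.log t - Real.log m) / l)) := by
            field_simp
        _ ≤ _ := h2
    have hsum := sum_le_sum hstep
    rw [← sum_div] at hsum
    have hdc := sum_vonMangoldt_countIn_le A hmul Y hY ⌊t⌋₊
    have htr := integral_le_weighted_sum (fun s => R ((Real.log t - s) / l)) (by fun_prop)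
      (fun a b hab => hanti (by gcongr)) (fun s => (hpos _).le) Y hY1
      (fun m => vonMangoldt m * (1 / m - 1 / t)) (fun m hm => by
        obtain ⟨hm1, hm2⟩ := mem_Ioc.mp hm
        have hm0 : (0 : ℝ) < m := by exact_mod_cast (by omega : 0 < m)
        have hmY : (m : ℝ) ≤ Y := by exact_mod_cast hm2
        refine mul_nonneg vonMangoldt_nonneg (sub_nonneg.mpr ?_)
        exact one_div_le_one_div_of_le hm0 (hmY.trans hYt)) l
      (fun k hk hkY => weight_tail Y k hk hkY t hYt l hl)
    have hI : ∫ s in (0 : ℝ)..l, R ((Real.log t - s) / l) =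
        Real.log t * R (Real.log t / l) := by
      have e : ∀ s, R ((Real.log t - s) / l) = R (Real.log t / l - s / l) := fun s => by
        rw [sub_div]
      simp only [e]
      rw [intervalIntegral.integral_comp_sub_div _ hl0.ne', zero_div, sub_zero, div_self hl0.ne',
        dickman_integral R hc h1 h' _ ((one_le_div hl0).mpr hX.le), smul_eq_mul]
      field_simp
    rw [hI] at htr
    have hle := htr.trans hsum
    rw [le_div_iff₀ ht0] at hle
    have hlogfl : Real.log ⌊t⌋₊ ≤ Real.log t := by
      have : 0 < ⌊t⌋₊ := Nat.floor_pos.mpr ht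
      exact Real.log_le_log (by exact_mod_cast this) (Nat.floor_le ht0.le)
    have hfin : Real.log t * (t * R (Real.log t / l)) ≤ Real.log t * countIn A ⌊t⌋₊ := by
      calc _ = Real.log t * R (Real.log t / l) * t := by ring
        _ ≤ _ := hle
        _ ≤ _ := hdc
        _ ≤ countIn A ⌊t⌋₊ * Real.log t := by gcongr
        _ = _ := mul_comm _ _
    exact le_of_mul_le_mul_left hfin hXpos
  refine ⟨?_, main⟩
  rcases le_total (Y : ℝ) t with h | h
  · refine le_trans ?_ (main h)
    have := hpos (Real.log t / l)
    nlinarith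
  · have hcount : countIn A ⌊t⌋₊ = ⌊t⌋₊ := by
      unfold countIn
      classical
      rw [filter_true_of_mem, Nat.card_Ioc, Nat.sub_zero]
      intro k hk
      obtain ⟨hk1, hk2⟩ := mem_Ioc.mp hk
      exact hY k hk1 (hk2.trans (Nat.floor_le_of_le h))
    rw [hcount]
    have hR : R (Real.log t / l) ≤ 1 := by
      rw [← h1 0 zero_le_one]
      exact hanti (div_nonneg (Real.log_nonneg ht) hl0.le)
    have := Nat.sub_one_lt_floor t
    nlinarith

/-! ### Power residues -/

/-- The set of positive integers that are `d`-th power residues mod `p`. -/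
def powerResidues (p d : ℕ) : Set ℕ :=
  {n | 0 < n ∧ ∃ x : (ZMod p)ˣ, (x : ZMod p) ^ d = (n : ZMod p)}

/-- The `d`-th powers form a subgroup of order `(p - 1) / d` of the units mod `p`. -/
lemma countIn_powerResidues_le (p d : ℕ) (hp : p.Prime) (hd : d ∣ p - 1) :
    countIn (powerResidues p d) (p - 1) ≤ (p - 1) / d := by
  classical
  have : Fact p.Prime := ⟨hp⟩
  have hcard := IsCyclic.card_powMonoidHom_range (G := (ZMod p)ˣ) d
  rw [Nat.card_eq_fintype_card (α := (ZMod p)ˣ), ZMod.card_units, Nat.gcd_eq_right hd] at hcard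
  rw [← hcard]
  let S : Set (ZMod p) := (fun x : (ZMod p)ˣ => (x : ZMod p)) ''
    (powMonoidHom d : (ZMod p)ˣ →* _).range
  have hS : S.ncard = Nat.card (powMonoidHom d : (ZMod p)ˣ →* (ZMod p)ˣ).range :=
    Set.ncard_image_of_injective _ Units.val_injective
  rw [← hS, Set.ncard_eq_toFinset_card']
  unfold countIn
  refine Finset.card_le_card_of_injOn (fun n : ℕ => (n : ZMod p)) ?_ ?_
  · intro n hn
    simp only [Finset.coe_filter, Set.mem_ofPred_eq] at hn
    obtain ⟨x, hx⟩ := hn.2.2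
    simp only [Set.coe_toFinset]
    exact ⟨x ^ d, ⟨x, rfl⟩, by simpa using hx⟩
  · intro a ha b hb hab
    simp only [Finset.coe_filter, Finset.mem_Ioc, Set.mem_ofPred_eq] at ha hb
    have := hp.two_le
    have hab' := (ZMod.natCast_eq_natCast_iff' a b p).mp hab
    rwa [Nat.mod_eq_of_lt (by omega), Nat.mod_eq_of_lt (by omega)] at hab'

theorem stmt3 (ρ : ℝ → ℝ)
    (hcont : ContinuousOn ρ (Set.Ici 0))
    (hρ1 : ∀ u : ℝ, 0 ≤ u → u ≤ 1 → ρ u = 1)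
    (hρ' : ∀ u : ℝ, 1 < u → HasDerivAt ρ (-(ρ (u - 1)) / u) u)
    (u : ℕ → ℝ)
    (hu : ∀ d : ℕ, 2 ≤ d → 0 < u d ∧ ρ (u d) = 1 / (d : ℝ)) :
    ∃ C : ℝ, 0 < C ∧ ∃ p₀ : ℕ, ∀ p : ℕ, p₀ ≤ p → p.Prime →
      ∀ d : ℕ, d ∣ p - 1 → 2 ≤ d →
        (leastDPowNonRes p d : ℝ) ≤ C * (p : ℝ) ^ (1 / u d) := by
  -- Nothing is assumed of `ρ` on the negative half-line, so extend it there by `1`.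
  let R : ℝ → ℝ := fun v => ρ (max v 0)
  have hRρ : ∀ v, 0 ≤ v → R v = ρ v := fun v hv => by simp only [R, max_eq_left hv]
  have hc : Continuous R :=
    hcont.comp_continuous (continuous_id.max continuous_const) fun v => Set.mem_Ici.mpr (le_max_right _ _)
  have h1 : ∀ v ≤ 1, R v = 1 := fun v hv => hρ1 _ (le_max_right _ _) (max_le hv zero_le_one)
  have h' : ∀ v, 1 < v → HasDerivAt R (-(R (v - 1)) / v) v := by
    intro v hv
    rw [hRρ (v - 1) (by linarith)]
    refine (hρ' v hv).congr_of_eventuallyEq ?_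
    filter_upwards [lt_mem_nhds (show (0 : ℝ) < v by linarith)] with w hw
    exact hRρ w hw.le
  set K := 1 + 2 * (Real.log 4 + 4) with hK
  refine ⟨2 * Real.exp K, by positivity, 0, ?_⟩
  intro p _ hp d hd hd2
  have : Fact p.Prime := ⟨hp⟩
  obtain ⟨hu0, hud⟩ := hu d hd2
  have hp2 := hp.two_le
  have hd0 : (0 : ℝ) < d := by exact_mod_cast (by omega : 0 < d)
  have hu1 : 1 < u d := by
    by_contra! h
    rw [hρ1 _ hu0.le h, eq_div_iff hd0.ne', one_mul] at hud
    have : (2 : ℝ) ≤ d := by exact_mod_cast hd2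
    linarith
  by_contra! hlt
  set g := leastDPowNonRes p d with hg
  have hp1 : (1 : ℝ) < p := by exact_mod_cast hp.one_lt
  have hpow1 : 1 ≤ (p : ℝ) ^ (1 / u d) := Real.one_le_rpow hp1.le (by positivity)
  have hg2 : (2 : ℝ) < g := by
    have : 1 ≤ Real.exp K := Real.one_le_exp (by
      have := Real.log_nonneg (x := 4) (by norm_num)
      positivity)
    nlinarith
  have hg2' : 2 < g := by exact_mod_cast hg2
  have hgp : g ≤ p := by
    refine Nat.sInf_le ⟨by omega, ?_⟩
    rintro ⟨x, hx⟩
    rw [ZMod.natCast_self] at hx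
    exact x.ne_zero (eq_zero_of_pow_eq_zero hx)
  have hA : ∀ m, 1 ≤ m → m ≤ g - 1 → m ∈ powerResidues p d := by
    intro m hm hmg
    have : m ∉ {n : ℕ | 0 < n ∧ ¬ ∃ x : (ZMod p)ˣ, ((x : ZMod p)) ^ d = (n : ZMod p)} :=
      Nat.notMem_of_lt_sInf (show m < g by omega)
    simp only [Set.mem_ofPred_eq, not_and, not_not] at this
    exact ⟨hm, this hm⟩
  have hmul : ∀ a ∈ powerResidues p d, ∀ b ∈ powerResidues p d, a * b ∈ powerResidues p d := by
    rintro a ⟨ha, x, hx⟩ b ⟨hb, y, hy⟩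
    refine ⟨Nat.mul_pos ha hb, x * y, ?_⟩
    rw [Units.val_mul, mul_pow, hx, hy, Nat.cast_mul]
  -- The strict bound on `g` gives `log p / l < u d` for `l = log (g - 1) - K`.
  have hYg : Real.exp K * (p : ℝ) ^ (1 / u d) < ((g - 1 : ℕ) : ℝ) := by
    rw [Nat.cast_sub (by omega), Nat.cast_one]
    linarith
  have hlogY : K + Real.log p / u d < Real.log ((g - 1 : ℕ) : ℝ) := by
    have h := Real.log_lt_log (by positivity) hYg
    rw [Real.log_mul (by positivity) (by positivity), Real.log_exp,
      Real.log_rpow (by linarith)] at h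
    calc _ = K + 1 / u d * Real.log p := by ring
      _ < _ := h
  set l := Real.log ((g - 1 : ℕ) : ℝ) - K with hl
  have hlogp : 0 < Real.log p := Real.log_pos hp1
  have hl1 : Real.log p / u d < l := by linarith
  have hl0 : 0 < l := (by positivity : 0 < Real.log p / u d).trans hl1
  have hp1' : (1 : ℝ) ≤ ((p - 1 : ℕ) : ℝ) := by exact_mod_cast (by omega : 1 ≤ p - 1)
  have hYp : ((g - 1 : ℕ) : ℝ) ≤ ((p - 1 : ℕ) : ℝ) := by exact_mod_cast (by omega : g - 1 ≤ p - 1)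
  have hlow := (countIn_lower R hc h1 h' (powerResidues p d) hmul (g - 1) hA (by omega) l hl0
    (by linarith) p ((p - 1 : ℕ) : ℝ) hp1' (by exact_mod_cast (by omega : p - 1 < p))).2 hYp
  rw [Nat.floor_natCast] at hlow
  have hup : (countIn (powerResidues p d) (p - 1) : ℝ) ≤ ((p - 1 : ℕ) : ℝ) / d :=
    le_trans (by exact_mod_cast countIn_powerResidues_le p d hp hd) Nat.cast_div_le
  have hv : Real.log ((p - 1 : ℕ) : ℝ) / l < u d := by
    have hle := Real.log_le_log (by linarith)
      (show ((p - 1 : ℕ) : ℝ) ≤ p by exact_mod_cast Nat.sub_le p 1)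
    rw [div_lt_iff₀ hu0] at hl1
    rw [div_lt_iff₀ hl0]
    linarith
  have hv1 : 1 ≤ Real.log ((p - 1 : ℕ) : ℝ) / l := by
    rw [one_le_div hl0]
    have hlogle := Real.log_le_log (by exact_mod_cast (by omega : 0 < g - 1)) hYp
    have := Real.log_nonneg (x := 4) (by norm_num)
    linarith
  have hstrict := dickman_strictAntiOn R hc h1 h' hv1 hu1.le hv
  rw [hRρ _ hu0.le, hud] at hstrict
  have : ((p - 1 : ℕ) : ℝ) * (1 / d) < ((p - 1 : ℕ) : ℝ) / d :=
    (mul_lt_mul_of_pos_left hstrict (by linarith)).trans_le (hlow.trans hup)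
  rw [mul_one_div] at this
  exact lt_irrefl _ this
end
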